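/- arXiv:2004.08873 — 3 statements merged into one kernel-verified Lean document; each statement's English description precedes it below -/
import Mathlib

section
/- Let (R, m) be a Noetherian local ring of dimension d, let f_1,...,f_r be a part of a system of parameters of R generating an ideal I, and let x_1,...,x_{d-r} be elements of R whose images form a system of parameters of R/I such that the length of R/(I + (x_1,...,x_{d-r})) is at most N-1 for some positive integer N. Then for every ε_1,...,ε_r ∈ m^N, the sequence f_1+ε_1,...,f_r+ε_r is again a part of a system of parameters of R. -/
open IsLocalRing Filter

/-- The length of an `R`-module `M`, defined as the Krull dimension of its lattice of
submodules (the supremum of lengths of strictly increasing chains of submodules). -/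
noncomputable def modLen (R : Type) [CommRing R] (M : Type) [AddCommGroup M] [Module R M] :
    WithBot ℕ∞ := Order.krullDim (Submodule R M)

/-- The length of the `i`-th local cohomology module of `M` with support in `J`. -/
noncomputable def lcLen (R : Type) [CommRing R] (J : Ideal R) (i : ℕ) (M : Type)
    [AddCommGroup M] [Module R M] : WithBot ℕ∞ :=
  modLen R ((localCohomology J i).obj (ModuleCat.of R M))

/-!
Put `K = (f₁ + ε₁, …, f_r + ε_r)`, `L = (x₁, …, x_s)` with `r + s = d`, and `J = I + L`. A module of
length at most `n` is killed by `mⁿ`, because by Nakayama multiplying a nonzero finite module by `m`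
lowers its length. Hence `m ^ (N - 1) ≤ J`, so every `εᵢ` lies in `m J`, and Nakayama gives
`K + L = J`. Dividing by an element of `m` lowers the dimension by at most one, so
`d - r ≤ dim R ⧸ K ≤ dim R ⧸ J + s = s`.
-/

lemma modLen_eq_length (R M : Type) [CommRing R] [AddCommGroup M] [Module R M] :
    modLen R M = Module.length R M :=
  (Module.coe_length R M).symm

section Length

variable {R M : Type*} [CommRing R] [AddCommGroup M] [Module R M]

lemma ringJacobson_pow_smul_eq_bot_of_height_le [IsNoetherian R M] {n : ℕ} {P : Submodule R M}
    (hP : Order.height P ≤ n) : Ring.jacobson R ^ n • P = ⊥ := by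
  induction n generalizing P with
  | zero => simpa using hP
  | succ n ih =>
    obtain rfl | hne := eq_or_ne P ⊥
    · exact Submodule.smul_bot _
    · have hlt : Ring.jacobson R • P < P :=
        Submodule.FG.jacobson_smul_lt hne (IsNoetherian.noetherian P)
      have hheight : Order.height (Ring.jacobson R • P) ≤ n := by
        have h := (Order.height_add_one_le hlt).trans hP
        rwa [Nat.cast_succ, ENat.add_le_add_iff_right ENat.one_ne_top] at h
      rw [pow_succ, Submodule.mul_smul, ih hheight]

lemma ringJacobson_pow_le_annihilator_of_length_le {n : ℕ} (h : Module.length R M ≤ n) :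
    Ring.jacobson R ^ n ≤ Module.annihilator R M := by
  have hfinite : IsFiniteLength R M :=
    Module.length_ne_top_iff.mp (ne_top_of_le_ne_top (ENat.natCast_ne_top n) h)
  have := (isFiniteLength_iff_isNoetherian_isArtinian.mp hfinite).1
  rw [Module.length_eq_height] at h
  rw [← Submodule.annihilator_top, Submodule.le_annihilator_iff]
  exact ringJacobson_pow_smul_eq_bot_of_height_le h

lemma ringJacobson_pow_le_mul_of_length_quotient_lt {I : Ideal R} {n : ℕ}
    (h : Module.length R (R ⧸ I) < n) : Ring.jacobson R ^ n ≤ Ring.jacobson R * I := by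
  cases n with
  | zero => exact absurd h not_lt_zero
  | succ k =>
    rw [Nat.cast_succ, ENat.lt_natCast_add_one_iff] at h
    rw [pow_succ']
    exact Ideal.mul_mono_right
      ((ringJacobson_pow_le_annihilator_of_length_le h).trans Ideal.annihilator_quotient.le)

end Length

lemma span_range_add_sup_eq_of_mem_jacobson_smul {R M ι : Type*} [CommRing R]
    [AddCommGroup M] [Module R M] [Finite ι] (f ε : ι → M) (P : Submodule R M)
    (hε : ∀ i, ε i ∈ Ring.jacobson R • (Submodule.span R (Set.range f) ⊔ P)) :
    Submodule.span R (Set.range fun i => f i + ε i) ⊔ P = Submodule.span R (Set.range f) ⊔ P := by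
  apply le_antisymm
  · refine sup_le (Submodule.span_le.mpr ?_) le_sup_right
    rintro _ ⟨i, rfl⟩
    exact add_mem (Submodule.mem_sup_left (Submodule.subset_span ⟨i, rfl⟩))
      (Submodule.smul_le_right (hε i))
  · have hle : Ring.jacobson R • (Submodule.span R (Set.range f) ⊔ P) ≤
        P ⊔ Ring.jacobson R • Submodule.span R (Set.range f) := by
      rw [Submodule.smul_sup, sup_comm]
      exact sup_le_sup_right Submodule.smul_le_right _
    refine sup_le ?_ le_sup_right
    refine Submodule.le_of_le_smul_of_le_jacobson_bot
      (Submodule.fg_span (Set.finite_range f)) Ideal.jacobson_bot.ge (Submodule.span_le.mpr ?_)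
    rintro _ ⟨i, rfl⟩
    rw [SetLike.mem_coe, sup_assoc, ← add_sub_cancel_right (f i) (ε i)]
    exact sub_mem (Submodule.mem_sup_left (Submodule.subset_span ⟨i, rfl⟩))
      (Submodule.mem_sup_right (hle (hε i)))

section KrullDimension

variable {R ι : Type*} [CommRing R]

lemma ringKrullDim_le_ringKrullDim_quotient_span_range_add_card [IsNoetherianRing R]
    {x : ι → R} (hx : ∀ i, x i ∈ Ring.jacobson R) :
    ringKrullDim R ≤ ringKrullDim (R ⧸ Ideal.span (Set.range x)) + ENat.card ι := by
  have hcard : (Set.range x).encard ≤ ENat.card ι := by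
    simpa only [Set.image_univ, Set.encard_univ] using Set.encard_image_le x Set.univ
  calc ringKrullDim R
      ≤ ringKrullDim (R ⧸ Ideal.span (Set.range x)) + (Set.range x).encard :=
        ringKrullDim_le_ringKrullDim_quotient_add_encard _ (Set.range_subset_iff.mpr hx)
    _ ≤ ringKrullDim (R ⧸ Ideal.span (Set.range x)) + ENat.card ι := by gcongr; exact_mod_cast hcard

lemma ringKrullDim_quotient_le_ringKrullDim_quotient_sup_add_card [IsNoetherianRing R]
    (I : Ideal R) {x : ι → R} (hx : ∀ i, x i ∈ Ring.jacobson R) :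
    ringKrullDim (R ⧸ I) ≤ ringKrullDim (R ⧸ I ⊔ Ideal.span (Set.range x)) + ENat.card ι := by
  have hmem : ∀ i, Ideal.Quotient.mk I (x i) ∈ Ring.jacobson (R ⧸ I) := fun i =>
    Ring.le_comap_jacobson (Ideal.Quotient.mk I) (hx i)
  have hmap : Ideal.span (Set.range fun i => Ideal.Quotient.mk I (x i)) =
      (Ideal.span (Set.range x)).map (Ideal.Quotient.mk I) := by
    rw [Ideal.map_span, ← Set.range_comp, Function.comp_def]
  have h := ringKrullDim_le_ringKrullDim_quotient_span_range_add_card hmem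
  rwa [hmap, ringKrullDim_eq_of_ringEquiv (DoubleQuot.quotQuotEquivQuotSup _ _)] at h

lemma le_ringJacobson_of_ringKrullDim_quotient_ne_bot [IsLocalRing R] {I : Ideal R}
    (h : ringKrullDim (R ⧸ I) ≠ ⊥) : I ≤ Ring.jacobson R := by
  rw [ringJacobson_eq_maximalIdeal]
  refine le_maximalIdeal fun htop => ?_
  have := Ideal.Quotient.subsingleton_iff.mpr htop
  exact h ringKrullDim_eq_bot_of_subsingleton

end KrullDimension

theorem statement0_general {R : Type*} [CommRing R] [IsNoetherianRing R] {r s : ℕ}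
    (hdim : ringKrullDim R = ((r + s : ℕ) : WithBot ℕ∞)) {f ε : Fin r → R} {x : Fin s → R}
    (hjac : Ideal.span (Set.range f) ⊔ Ideal.span (Set.range x) ≤ Ring.jacobson R)
    (hzero : ringKrullDim (R ⧸ Ideal.span (Set.range f) ⊔ Ideal.span (Set.range x)) = 0)
    (hε : ∀ i, ε i ∈ Ring.jacobson R * (Ideal.span (Set.range f) ⊔ Ideal.span (Set.range x))) :
    ringKrullDim (R ⧸ Ideal.span (Set.range fun i => f i + ε i)) = (s : WithBot ℕ∞) := by
  have hsup : Ideal.span (Set.range fun i => f i + ε i) ⊔ Ideal.span (Set.range x) =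
      Ideal.span (Set.range f) ⊔ Ideal.span (Set.range x) :=
    span_range_add_sup_eq_of_mem_jacobson_smul f ε _ hε
  rw [← hsup] at hjac hzero
  apply le_antisymm
  · have h := ringKrullDim_quotient_le_ringKrullDim_quotient_sup_add_card
      (Ideal.span (Set.range fun i => f i + ε i)) fun i =>
        hjac (Ideal.mem_sup_right (Ideal.subset_span ⟨i, rfl⟩))
    simpa [hzero] using h
  · have h := ringKrullDim_le_ringKrullDim_quotient_span_range_add_card fun i =>
      hjac (Ideal.mem_sup_left (Ideal.subset_span ⟨i, rfl⟩))
    rw [hdim, ENat.card_eq_coe_fintype_card, Fintype.card_fin, add_comm r s, Nat.cast_add] at h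
    exact ENat.WithBot.add_le_add_natCast_right_iff.mp h

theorem statement0 (R : Type) [CommRing R] [IsNoetherianRing R] [IsLocalRing R]
    (d r N : ℕ) (hrd : r ≤ d) (hN : 0 < N) (hdim : ringKrullDim R = d)
    (f : Fin r → R) (I : Ideal R) (hI : I = Ideal.span (Set.range f))
    (hsop : ringKrullDim (R ⧸ I) = ((d - r : ℕ) : WithBot ℕ∞))
    (x : Fin (d - r) → R)
    (hxsop : ringKrullDim (R ⧸ (I ⊔ Ideal.span (Set.range x))) = (0 : ℕ))
    (hlen : modLen R (R ⧸ (I ⊔ Ideal.span (Set.range x))) ≤ (((N - 1 : ℕ) : ℕ∞) : WithBot ℕ∞))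
    (ε : Fin r → R) (hε : ∀ i, ε i ∈ maximalIdeal R ^ N) :
    ringKrullDim (R ⧸ Ideal.span (Set.range fun i => f i + ε i)) =
      ((d - r : ℕ) : WithBot ℕ∞) := by
  subst hI
  rw [modLen_eq_length, WithBot.coe_le_coe] at hlen
  have hlt := hlen.trans_lt (Nat.cast_lt.mpr (Nat.sub_one_lt hN.ne'))
  have hjac := le_ringJacobson_of_ringKrullDim_quotient_ne_bot (hxsop.trans_ne WithBot.coe_ne_bot)
  rw [← ringJacobson_eq_maximalIdeal] at hε
  exact statement0_general (by rw [hdim, Nat.add_sub_cancel' hrd]) hjac hxsop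
    fun i => ringJacobson_pow_le_mul_of_length_quotient_lt hlt (hε i)
end

section
/- Let (R, m) be a Noetherian local ring of dimension d with H^i_m(R) of finite length for all i < d (i.e., R generalized Cohen-Macaulay), and let f be a parameter element of R (dim R/(f) = d-1). For any ε ∈ m such that ε annihilates H^i_m(R) for all i < d and f + ε is also a parameter element, the lengths of H^i_m(R/(f)) and H^i_m(R/(f+ε)) agree for all i < d - 1. -/
open IsLocalRing Filter

/-!
Local cohomology is a filtered colimit of Ext modules, so it has long exact sequences; together
with injective hulls and Artin-Rees (the torsion part of an injective module is injective) this
gives `Hⁱ_J(K) = 0` for `i > 0` whenever `K` is `J`-power torsion.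

Suppose a power of `J` kills `Hⁱ_J(M)` for all `i ≤ k`. Then `J` lies in every associated prime `p`
of `M` of coheight at most `k`. Otherwise we may divide `M` by its `J`-power torsion and choose
`y ∈ J` regular on `M`. The minimal primes over `p + (y)` are associated to `M/yM` and have smaller
coheight, so by induction they contain `J`; hence the class of `z` in `M/yⁿM`, where `p = ann z`, is
`J`-power torsion for every `n`. The annihilator of `H⁰_J(M/yⁿM)` contains the product of those of
`H⁰_J(M)` and `H¹_J(M)`, hence a power of `J` independent of `n`, and Krull's intersection theorem
shows that this power kills `z`, i.e. lies in `p`.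

If moreover `M/gM` has dimension at most `k`, then `K = (0 :_M g)` has only associated primes of
coheight at most `k`, so it is `J`-power torsion. Thus `M` and `M/K ≅ gM` have the same local
cohomology in positive degrees, and the long exact sequence of `0 → gM → M → M/gM → 0` reads
`Hⁱ(M) → Hⁱ(M) → Hⁱ(M/gM) → Hⁱ⁺¹(M) → Hⁱ⁺¹(M)` with both outer maps multiplication by `g`. So the
length of `Hⁱ(M/gM)` depends only on how `g` acts on `Hⁱ(M)` and `Hⁱ⁺¹(M)`.
-/

section LongExactSequence

open CategoryTheory Limits

universe v v' u u'

variable {C : Type u} [Category.{v} C] {D : Type u'} [Category.{v'} D] [Abelian C] [Abelian D]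

lemma exact_mk_of_iso {S : ShortComplex D} (hS : S.Exact) {X₁ X₂ X₃ : D} (e₁ : X₁ ≅ S.X₁)
    (e₂ : X₂ ≅ S.X₂) (e₃ : X₃ ≅ S.X₃) {f : X₁ ⟶ X₂} {g : X₂ ⟶ X₃}
    (hf : f = e₁.hom ≫ S.f ≫ e₂.inv) (hg : g = e₂.hom ≫ S.g ≫ e₃.inv) :
    ∃ w, (ShortComplex.mk f g w).Exact := by
  subst hf hg
  exact ⟨by simp, ShortComplex.exact_of_iso
    (ShortComplex.isoMk e₁.symm e₂.symm e₃.symm (by simp) (by simp)) hS⟩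

/-- Natural transformations `F ⟶ G ⟶ H` that evaluate to a short exact sequence at every
projective object. -/
structure ShortExactOnProjectives {F G H : C ⥤ D} (α : F ⟶ G) (β : G ⟶ H) : Prop where
  zero : α ≫ β = 0
  shortExact : ∀ (P : C) [Projective P],
    (ShortComplex.mk (α.app P) (β.app P) (by rw [← NatTrans.comp_app, zero]; rfl)).ShortExact

namespace ShortExactOnProjectives

variable {F G H : C ⥤ D} [F.Additive] [G.Additive] [H.Additive] {α : F ⟶ G} {β : G ⟶ H}

/-- The short complex of chain complexes obtained by applying `F ⟶ G ⟶ H` to a projective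
resolution. -/
noncomputable abbrev complexes (h : ShortExactOnProjectives α β) {X : C}
    (P : ProjectiveResolution X) : ShortComplex (ChainComplex D ℕ) :=
  ShortComplex.mk ((NatTrans.mapHomologicalComplex α _).app P.complex)
    ((NatTrans.mapHomologicalComplex β _).app P.complex) (by
      ext i
      exact congr_app h.zero (P.complex.X i))

lemma complexes_shortExact (h : ShortExactOnProjectives α β) {X : C}
    (P : ProjectiveResolution X) : (h.complexes P).ShortExact :=
  HomologicalComplex.shortExact_of_degreewise_shortExact _ fun i => h.shortExact (P.complex.X i)

/-- The map between the short complexes `ShortExactOnProjectives.complexes` induced by a map of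
projective resolutions. -/
noncomputable def complexesMap (h : ShortExactOnProjectives α β) {X Y : C}
    {P : ProjectiveResolution X} {Q : ProjectiveResolution Y} (φ : P.complex ⟶ Q.complex) :
    h.complexes P ⟶ h.complexes Q where
  τ₁ := (F.mapHomologicalComplex _).map φ
  τ₂ := (G.mapHomologicalComplex _).map φ
  τ₃ := (H.mapHomologicalComplex _).map φ

variable [HasProjectiveResolutions C]

/-- The connecting morphism between left derived functors. -/
noncomputable def δ (h : ShortExactOnProjectives α β) (n : ℕ) :
    H.leftDerived (n + 1) ⟶ F.leftDerived n where
  app X := ((projectiveResolution X).isoLeftDerivedObj H (n + 1)).hom ≫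
    (h.complexes_shortExact (projectiveResolution X)).δ (n + 1) n (by simp) ≫
    ((projectiveResolution X).isoLeftDerivedObj F n).inv
  naturality X Y f := by
    let φ := ProjectiveResolution.lift f (projectiveResolution X) (projectiveResolution Y)
    have hφ := ProjectiveResolution.lift_commutes_zero f (projectiveResolution X)
      (projectiveResolution Y)
    have resolve := CommSq.mk
      (ProjectiveResolution.isoLeftDerivedObj_hom_naturality f _ _ φ hφ H (n + 1))
    have connect := CommSq.mk (HomologicalComplex.HomologySequence.δ_naturality (h.complexesMap φ)
      (h.complexes_shortExact _) (h.complexes_shortExact _) (n + 1) n (by simp)).symm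
    have unresolve := CommSq.mk
      (ProjectiveResolution.isoLeftDerivedObj_inv_naturality f _ _ φ hφ F n).symm
    exact (resolve.vert_comp (connect.vert_comp unresolve)).w

lemma exact₁ (h : ShortExactOnProjectives α β) (n : ℕ) (X : C) :
    ∃ w, (ShortComplex.mk ((h.δ n).app X) ((NatTrans.leftDerived α n).app X) w).Exact :=
  exact_mk_of_iso
    ((h.complexes_shortExact (projectiveResolution X)).homology_exact₁ (n + 1) n (by simp))
    ((projectiveResolution X).isoLeftDerivedObj H (n + 1))
    ((projectiveResolution X).isoLeftDerivedObj F n)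
    ((projectiveResolution X).isoLeftDerivedObj G n)
    rfl (ProjectiveResolution.leftDerived_app_eq _ _ _)

lemma exact₂ (h : ShortExactOnProjectives α β) (n : ℕ) (X : C) :
    ∃ w, (ShortComplex.mk ((NatTrans.leftDerived α n).app X) ((NatTrans.leftDerived β n).app X)
      w).Exact :=
  exact_mk_of_iso ((h.complexes_shortExact (projectiveResolution X)).homology_exact₂ n)
    ((projectiveResolution X).isoLeftDerivedObj F n)
    ((projectiveResolution X).isoLeftDerivedObj G n)
    ((projectiveResolution X).isoLeftDerivedObj H n)
    (ProjectiveResolution.leftDerived_app_eq _ _ _)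
    (ProjectiveResolution.leftDerived_app_eq _ _ _)

lemma exact₃ (h : ShortExactOnProjectives α β) (n : ℕ) (X : C) :
    ∃ w, (ShortComplex.mk ((NatTrans.leftDerived β (n + 1)).app X) ((h.δ n).app X) w).Exact :=
  exact_mk_of_iso
    ((h.complexes_shortExact (projectiveResolution X)).homology_exact₃ (n + 1) n (by simp))
    ((projectiveResolution X).isoLeftDerivedObj G (n + 1))
    ((projectiveResolution X).isoLeftDerivedObj H (n + 1))
    ((projectiveResolution X).isoLeftDerivedObj F n)
    (ProjectiveResolution.leftDerived_app_eq _ _ _) rfl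

end ShortExactOnProjectives

end LongExactSequence

section LeftDerived

open CategoryTheory Limits

variable {C D : Type*} [Category* C] [Category* D] [Abelian C] [Abelian D]

section Zero

variable {F G : C ⥤ D} [F.Additive] [G.Additive] (α : F ⟶ G)

lemma opcyclesMap_comp_fromLeftDerivedZero' {X : C} (P : ProjectiveResolution X) :
    HomologicalComplex.opcyclesMap ((NatTrans.mapHomologicalComplex α _).app P.complex) 0 ≫
      P.fromLeftDerivedZero' G = P.fromLeftDerivedZero' F ≫ α.app X := by
  rw [← cancel_epi (HomologicalComplex.pOpcycles _ _),
    HomologicalComplex.p_opcyclesMap_assoc, P.pOpcycles_comp_fromLeftDerivedZero',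
    ← Category.assoc, P.pOpcycles_comp_fromLeftDerivedZero']
  exact (α.naturality _).symm

variable [HasProjectiveResolutions C] in
lemma leftDerived_zero_app_comp_fromLeftDerivedZero (X : C) :
    (NatTrans.leftDerived α 0).app X ≫ G.fromLeftDerivedZero.app X =
      F.fromLeftDerivedZero.app X ≫ α.app X := by
  let P := projectiveResolution X
  have cycles := CommSq.mk (HomologicalComplex.homologyι_naturality
    ((NatTrans.mapHomologicalComplex α (.down ℕ)).app P.complex) 0)
  have opcycles := CommSq.mk (opcyclesMap_comp_fromLeftDerivedZero' α P)
  simp only [P.leftDerived_app_eq α, P.fromLeftDerivedZero_eq, Category.assoc,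
    Iso.inv_hom_id_assoc]
  exact congr_arg _ (cycles.vert_comp opcycles).w

end Zero

section Center

lemma homologyMap_eq_catCenter_app {ι : Type*} {c : ComplexShape ι} (z : CatCenter D)
    {K : HomologicalComplex D c} {φ : K ⟶ K} (hφ : ∀ i, φ.f i = z.app (K.X i)) (i : ι) :
    HomologicalComplex.homologyMap φ i = z.app (K.homology i) := by
  have hcycles : HomologicalComplex.cyclesMap φ i = z.app (K.cycles i) := by
    rw [← cancel_mono (K.iCycles i), HomologicalComplex.cyclesMap_i, hφ, z.naturality]
  rw [← cancel_epi (K.homologyπ i), HomologicalComplex.homologyπ_naturality, hcycles,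
    z.naturality]

lemma leftDerived_app_eq_catCenter_app [HasProjectiveResolutions C] {F : C ⥤ D} [F.Additive]
    (z : CatCenter D) {α : F ⟶ F} (hα : ∀ X, α.app X = z.app (F.obj X)) (n : ℕ) (X : C) :
    (NatTrans.leftDerived α n).app X = z.app ((F.leftDerived n).obj X) := by
  let e := (projectiveResolution X).isoLeftDerivedObj F n
  have h : (NatTrans.leftDerived α n).app X = e.hom ≫ z.app _ ≫ e.inv := by
    rw [ProjectiveResolution.leftDerived_app_eq α (projectiveResolution X)]
    exact congr_arg (e.hom ≫ · ≫ e.inv) (homologyMap_eq_catCenter_app z (fun i => hα _) n)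
  rw [h, z.naturality_assoc, e.hom_inv_id, Category.comp_id]

end Center

end LeftDerived

section Ext

open CategoryTheory Limits Opposite

universe u v

variable {R : Type*} {C : Type u} [Category.{v} C] [Abelian C]

section Ring

variable [Ring R] [Linear R C] {S : ShortComplex C}

lemma linearYoneda_map_comp_map_eq_zero (S : ShortComplex C) :
    (linearYoneda R C).map S.f ≫ (linearYoneda R C).map S.g = 0 := by
  rw [← Functor.map_comp, S.zero]
  ext X φ
  exact comp_zero (f := φ)

variable (R) in
lemma linearYoneda_shortExactOnProjectives (hS : S.ShortExact) :
    ShortExactOnProjectives (NatTrans.rightOp ((linearYoneda R C).map S.g))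
      (NatTrans.rightOp ((linearYoneda R C).map S.f)) where
  zero := by
    ext X
    exact congr_arg Quiver.Hom.op (congr_app (linearYoneda_map_comp_map_eq_zero S) (op X))
  shortExact P _ := by
    have := hS.mono_f
    have := hS.epi_g
    refine ShortComplex.ShortExact.op (S := ShortComplex.mk (((linearYoneda R C).map S.f).app _)
      (((linearYoneda R C).map S.g).app _)
      (congr_app (linearYoneda_map_comp_map_eq_zero S) (op P))) (.mk' ?_ ?_ ?_)
    · exact (ShortComplex.moduleCat_exact_iff _).2 fun φ hφ =>
        ⟨hS.exact.lift φ hφ, hS.exact.lift_f φ hφ⟩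
    · exact (ModuleCat.mono_iff_injective _).2 fun φ ψ h => (cancel_mono S.f).1 h
    · exact (ModuleCat.epi_iff_surjective _).2 fun φ =>
        ⟨Projective.factorThru (P := P) φ S.g, Projective.factorThru_comp (P := P) φ S.g⟩

instance preservesFiniteLimits_linearYoneda_obj (Y : C) :
    PreservesFiniteLimits ((linearYoneda R C).obj Y) := by
  have : PreservesFiniteLimits ((linearYoneda R C).obj Y ⋙ forget _) :=
    inferInstanceAs (PreservesFiniteLimits (yoneda.obj Y))
  exact preservesFiniteLimits_of_reflects_of_preserves _ (forget _)

instance preservesFiniteColimits_rightOp_linearYoneda_obj (Y : C) :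
    PreservesFiniteColimits ((linearYoneda R C).obj Y).rightOp :=
  preservesFiniteColimits_rightOp _

variable [EnoughProjectives C]

variable (R) in
/-- The connecting homomorphism `Extⁱ(X, S.X₃) ⟶ Extⁱ⁺¹(X, S.X₁)` of a short exact sequence. -/
noncomputable def extδ (hS : S.ShortExact) (i : ℕ) (X : Cᵒᵖ) :
    ((Ext R C i).obj X).obj S.X₃ ⟶ ((Ext R C (i + 1)).obj X).obj S.X₁ :=
  (((linearYoneda_shortExactOnProjectives R hS).δ i).app X.unop).unop

lemma extδ_naturality (hS : S.ShortExact) (i : ℕ) {X Y : Cᵒᵖ} (f : X ⟶ Y) :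
    ((Ext R C i).map f).app S.X₃ ≫ extδ R hS i Y =
      extδ R hS i X ≫ ((Ext R C (i + 1)).map f).app S.X₁ :=
  Quiver.Hom.op_inj (((linearYoneda_shortExactOnProjectives R hS).δ i).naturality f.unop).symm

lemma ext_exact₁ (hS : S.ShortExact) (i : ℕ) (X : Cᵒᵖ) :
    Function.Exact (extδ R hS i X) (((Ext R C (i + 1)).obj X).map S.f) := by
  obtain ⟨w, h⟩ := (linearYoneda_shortExactOnProjectives R hS).exact₃ i X.unop
  exact (ShortComplex.ShortExact.moduleCat_exact_iff_function_exact _).1 h.unop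

lemma ext_exact₂ (hS : S.ShortExact) (i : ℕ) (X : Cᵒᵖ) :
    Function.Exact (((Ext R C i).obj X).map S.f) (((Ext R C i).obj X).map S.g) := by
  obtain ⟨w, h⟩ := (linearYoneda_shortExactOnProjectives R hS).exact₂ i X.unop
  exact (ShortComplex.ShortExact.moduleCat_exact_iff_function_exact _).1 h.unop

lemma ext_exact₃ (hS : S.ShortExact) (i : ℕ) (X : Cᵒᵖ) :
    Function.Exact (((Ext R C i).obj X).map S.g) (extδ R hS i X) := by
  obtain ⟨w, h⟩ := (linearYoneda_shortExactOnProjectives R hS).exact₁ i X.unop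
  exact (ShortComplex.ShortExact.moduleCat_exact_iff_function_exact _).1 h.unop

variable (R) in
lemma isZero_ext_succ_of_injective (X : Cᵒᵖ) (E : C) [Injective E] (n : ℕ) :
    IsZero (((Ext R C (n + 1)).obj X).obj E) := by
  let P := projectiveResolution X.unop
  refine IsZero.of_iso ?_ (P.isoExt (n + 1) E)
  rw [← HomologicalComplex.exactAt_iff_isZero_homology,
    HomologicalComplex.exactAt_iff' _ n (n + 1) (n + 2) (by simp) (by simp),
    ShortComplex.moduleCat_exact_iff]
  exact fun φ hφ =>
    ⟨(P.exact_succ n).descToInjective φ hφ, (P.exact_succ n).comp_descToInjective φ hφ⟩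

variable (R) in
/-- The comparison isomorphism `Hom(X, Y) ≅ Ext⁰(X, Y)`. -/
noncomputable def homIsoExtZero (X Y : C) :
    ((linearYoneda R C).obj Y).obj (op X) ≅ ((Ext R C 0).obj (op X)).obj Y :=
  (asIso (((linearYoneda R C).obj Y).rightOp.fromLeftDerivedZero.app X)).unop

lemma homIsoExtZero_inv_naturality_left {X X' : C} (f : X' ⟶ X) (Y : C) :
    ((Ext R C 0).map f.op).app Y ≫ (homIsoExtZero R X' Y).inv =
      (homIsoExtZero R X Y).inv ≫ ((linearYoneda R C).obj Y).map f.op := by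
  rw [Iso.comp_inv_eq, Category.assoc, Iso.eq_inv_comp]
  exact Quiver.Hom.op_inj
    (((linearYoneda R C).obj Y).rightOp.fromLeftDerivedZero.naturality f)

lemma homIsoExtZero_inv_naturality_right (X : C) {Y Y' : C} (f : Y ⟶ Y') :
    ((Ext R C 0).obj (op X)).map f ≫ (homIsoExtZero R X Y').inv =
      (homIsoExtZero R X Y).inv ≫ ((linearYoneda R C).map f).app (op X) := by
  rw [Iso.comp_inv_eq, Category.assoc, Iso.eq_inv_comp]
  exact Quiver.Hom.op_inj (leftDerived_zero_app_comp_fromLeftDerivedZero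
    (NatTrans.rightOp ((linearYoneda R C).map f)) X)

end Ring

section CommRing

variable [CommRing R]

/-- Multiplication by `r` as an element of the centre of the opposite of `ModuleCat R`. -/
def smulCatCenterOp (r : R) : CatCenter (ModuleCat R)ᵒᵖ where
  app X := (r • 𝟙 X.unop).op
  naturality X Y f := Quiver.Hom.unop_inj (by simp)

variable [Linear R C] [EnoughProjectives C]

lemma ext_map_smul_id (i : ℕ) (X : Cᵒᵖ) (Y : C) (r : R) :
    ((Ext R C i).obj X).map (r • 𝟙 Y) = r • 𝟙 _ := by
  have smul_comp (W : C) : (NatTrans.rightOp ((linearYoneda R C).map (r • 𝟙 Y))).app W =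
      (smulCatCenterOp r).app (op (ModuleCat.of R (W ⟶ Y))) := by
    refine Quiver.Hom.unop_inj (ModuleCat.hom_ext (LinearMap.ext fun φ => ?_))
    exact (Linear.comp_smul _ _ _ φ r (𝟙 Y)).trans (congr_arg (r • ·) (Category.comp_id φ))
  exact Quiver.Hom.op_inj (leftDerived_app_eq_catCenter_app _ smul_comp i X.unop)

end CommRing

end Ext

section Colimit

open CategoryTheory Limits

universe w

lemma exact_of_exact_app {K C : Type*} [Category* K] [Category* C] [Abelian C]
    {S : ShortComplex (K ⥤ C)} (hS : ∀ k, (S.map ((evaluation K C).obj k)).Exact) : S.Exact := by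
  rw [ShortComplex.exact_iff_isZero_homology, Functor.isZero_iff]
  exact fun k => ((ShortComplex.exact_iff_isZero_homology _).1 (hS k)).of_iso
    (S.mapHomologyIso ((evaluation K C).obj k)).symm

lemma function_exact_of_isColimit {R : Type*} [Ring R] {K : Type*} [Category* K]
    [HasColimitsOfShape K (ModuleCat.{w} R)] [HasExactColimitsOfShape K (ModuleCat.{w} R)]
    {E₁ E₂ E₃ : K ⥤ ModuleCat.{w} R} {α : E₁ ⟶ E₂} {β : E₂ ⟶ E₃}
    (hαβ : ∀ k, Function.Exact (α.app k) (β.app k)) {c₁ : Cocone E₁} {c₂ : Cocone E₂}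
    {c₃ : Cocone E₃} (h₁ : IsColimit c₁) (h₂ : IsColimit c₂) (h₃ : IsColimit c₃)
    {a : c₁.pt ⟶ c₂.pt} {b : c₂.pt ⟶ c₃.pt} (ha : ∀ k, c₁.ι.app k ≫ a = α.app k ≫ c₂.ι.app k)
    (hb : ∀ k, c₂.ι.app k ≫ b = β.app k ≫ c₃.ι.app k) : Function.Exact a b := by
  have w : α ≫ β = 0 := by
    ext k x
    exact (hαβ k).apply_apply_eq_zero x
  have hS : (ShortComplex.mk α β w).Exact := exact_of_exact_app fun k =>
    (ShortComplex.ShortExact.moduleCat_exact_iff_function_exact _).2 (hαβ k)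
  exact (ShortComplex.ShortExact.moduleCat_exact_iff_function_exact _).1
    (colim.exact_mapShortComplex hS h₁ h₂ h₃ a b ha hb)

instance ab5OfSize_zero_moduleCat (R : Type w) [CommRing R] : AB5OfSize.{0, 0} (ModuleCat.{w} R) :=
  AB5OfSize_of_univLE.{0, 0, w, w} _

instance preservesFilteredColimitsOfSize_zero_forget_moduleCat (R : Type w) [CommRing R] :
    PreservesFilteredColimitsOfSize.{0, 0} (forget (ModuleCat.{w} R)) :=
  preservesSmallestFilteredColimits_of_preservesFilteredColimits.{w, w} _

end Colimit

section LocalCohomology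

open CategoryTheory Limits Opposite

universe u

variable {R : Type u} [CommRing R] (J : Ideal R)

/-- The `i`-th local cohomology module `Hⁱ_J(M)` of an unbundled module. -/
abbrev LocalCohomologyModule (i : ℕ) (M : Type u) [AddCommGroup M] [Module R M] : Type u :=
  (localCohomology J i).obj (ModuleCat.of R M)

noncomputable section

namespace LocalCohomologyModule

/-- The directed system `n ↦ Extⁱ(R/Jⁿ, M)`. -/
abbrev extSystem (i : ℕ) (M : ModuleCat.{u} R) : ℕᵒᵖᵒᵖ ⥤ ModuleCat.{u} R :=
  localCohomology.diagram (localCohomology.idealPowersDiagram J) i ⋙ (evaluation _ _).obj M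

/-- The morphism of directed systems `Extⁱ(R/Jⁿ, M) → Extⁱ(R/Jⁿ, N)` induced by `M ⟶ N`. -/
abbrev extSystemMap (i : ℕ) {M N : ModuleCat.{u} R} (f : M ⟶ N) :
    extSystem J i M ⟶ extSystem J i N :=
  Functor.whiskerLeft _ ((evaluation _ _).map f)

/-- The cocone exhibiting `Hⁱ_J(M)` as the colimit of the modules `Extⁱ(R/Jⁿ, M)`. -/
def cocone (i : ℕ) (M : ModuleCat.{u} R) : Cocone (extSystem J i M) :=
  ((evaluation _ _).obj M).mapCocone (colimit.cocone _)

def isColimitCocone (i : ℕ) (M : ModuleCat.{u} R) : IsColimit (cocone J i M) :=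
  isColimitOfPreserves _ (colimit.isColimit _)

lemma cocone_ι_app_comp_map (i : ℕ) {M N : ModuleCat.{u} R} (f : M ⟶ N) (k : ℕᵒᵖᵒᵖ) :
    (cocone J i M).ι.app k ≫ (localCohomology J i).map f =
      (extSystemMap J i f).app k ≫ (cocone J i N).ι.app k :=
  (((colimit.cocone (localCohomology.diagram
    (localCohomology.idealPowersDiagram J) i)).ι.app k).naturality f).symm

lemma exists_cocone_ι_app_eq (i : ℕ) {M : Type u} [AddCommGroup M] [Module R M]
    (y : LocalCohomologyModule J i M) : ∃ k x, (cocone J i (ModuleCat.of R M)).ι.app k x = y :=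
  Concrete.isColimit_exists_rep _ (isColimitCocone J i (ModuleCat.of R M)) y

variable {A B C : Type u} [AddCommGroup A] [Module R A] [AddCommGroup B] [Module R B]
  [AddCommGroup C] [Module R C]

section Map

/-- The map induced by a linear map on local cohomology. -/
def map (i : ℕ) (f : A →ₗ[R] B) : LocalCohomologyModule J i A →ₗ[R] LocalCohomologyModule J i B :=
  ((localCohomology J i).map (ModuleCat.ofHom f)).hom

lemma map_comp (i : ℕ) (g : B →ₗ[R] C) (f : A →ₗ[R] B) :
    map J i (g ∘ₗ f) = map J i g ∘ₗ map J i f := by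
  simp only [map, ModuleCat.ofHom_comp, Functor.map_comp, ModuleCat.hom_comp]

lemma map_lsmul (i : ℕ) (r : R) :
    map J i (LinearMap.lsmul R A r) = LinearMap.lsmul R (LocalCohomologyModule J i A) r := by
  suffices (localCohomology J i).map (r • 𝟙 (ModuleCat.of R A)) = r • 𝟙 _ from
    congr_arg ModuleCat.Hom.hom this
  refine (isColimitCocone J i (ModuleCat.of R A)).hom_ext fun k => ?_
  have h : (extSystemMap J i (r • 𝟙 (ModuleCat.of R A))).app k = r • 𝟙 _ :=
    ext_map_smul_id i _ _ r
  rw [cocone_ι_app_comp_map, h, Linear.smul_comp, Category.id_comp]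
  exact (congr_arg (r • ·) (Category.comp_id _).symm).trans (Linear.comp_smul _ _ _ _ r _).symm

end Map

section LongExactSequence

/-- The connecting homomorphisms `Extⁱ(R/Jⁿ, S.X₃) → Extⁱ⁺¹(R/Jⁿ, S.X₁)`, as a morphism of
directed systems. -/
def extSystemδ {S : ShortComplex (ModuleCat.{u} R)} (hS : S.ShortExact) (i : ℕ) :
    extSystem J i S.X₃ ⟶ extSystem J (i + 1) S.X₁ where
  app _ := extδ R hS i _
  naturality _ _ φ :=
    extδ_naturality hS i ((localCohomology.ringModIdeals _).op.map φ)

variable {f : A →ₗ[R] B} {g : B →ₗ[R] C}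

lemma shortExact_ofHom (hf : Function.Injective f) (hfg : Function.Exact f g)
    (hg : Function.Surjective g) : (ShortComplex.mk (ModuleCat.ofHom f) (ModuleCat.ofHom g)
      (ModuleCat.hom_ext hfg.linearMap_comp_eq_zero)).ShortExact :=
  ModuleCat.shortComplex_shortExact _ hfg hf hg

/-- The connecting homomorphism `Hⁱ_J(C) → Hⁱ⁺¹_J(A)` of a short exact sequence
`0 → A → B → C → 0`. -/
def δ (hf : Function.Injective f) (hfg : Function.Exact f g) (hg : Function.Surjective g) (i : ℕ) :
    LocalCohomologyModule J i C →ₗ[R] LocalCohomologyModule J (i + 1) A :=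
  ((isColimitCocone J i (ModuleCat.of R C)).map (cocone J (i + 1) (ModuleCat.of R A))
    (extSystemδ J (shortExact_ofHom hf hfg hg) i)).hom

variable (hf : Function.Injective f) (hfg : Function.Exact f g) (hg : Function.Surjective g)
include hf hfg hg

lemma exact_δ_map (i : ℕ) : Function.Exact (δ J hf hfg hg i) (map J (i + 1) f) :=
  function_exact_of_isColimit (α := extSystemδ J (shortExact_ofHom hf hfg hg) i)
    (β := extSystemMap J (i + 1) (ModuleCat.ofHom f))
    (fun _ => ext_exact₁ (shortExact_ofHom hf hfg hg) i _)
    (isColimitCocone J i _) (isColimitCocone J (i + 1) _) (isColimitCocone J (i + 1) _)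
    ((isColimitCocone J i _).ι_map _ _) (cocone_ι_app_comp_map J (i + 1) _)

lemma exact_map_map (i : ℕ) : Function.Exact (map J i f) (map J i g) :=
  function_exact_of_isColimit (α := extSystemMap J i (ModuleCat.ofHom f))
    (β := extSystemMap J i (ModuleCat.ofHom g))
    (fun _ => ext_exact₂ (shortExact_ofHom hf hfg hg) i _)
    (isColimitCocone J i _) (isColimitCocone J i _) (isColimitCocone J i _)
    (cocone_ι_app_comp_map J i _) (cocone_ι_app_comp_map J i _)

lemma exact_map_δ (i : ℕ) : Function.Exact (map J i g) (δ J hf hfg hg i) :=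
  function_exact_of_isColimit (α := extSystemMap J i (ModuleCat.ofHom g))
    (β := extSystemδ J (shortExact_ofHom hf hfg hg) i)
    (fun _ => ext_exact₃ (shortExact_ofHom hf hfg hg) i _)
    (isColimitCocone J i _) (isColimitCocone J i _) (isColimitCocone J (i + 1) _)
    (cocone_ι_app_comp_map J i _) ((isColimitCocone J i _).ι_map _ _)

end LongExactSequence

end LocalCohomologyModule

end

end LocalCohomology

section PowTorsion

variable {R : Type*} [CommRing R] {J : Ideal R} {M N : Type*} [AddCommGroup M] [Module R M]
  [AddCommGroup N] [Module R N]

variable (J M) in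
/-- The `J`-power torsion submodule `Γ_J(M)`: the elements killed by some power of `J`. -/
def powTorsion : Submodule R M where
  carrier := {x : M | ∃ n : ℕ, ∀ r ∈ J ^ n, r • x = 0}
  zero_mem' := ⟨0, fun _ _ => smul_zero _⟩
  add_mem' := by
    rintro x y ⟨m, hm⟩ ⟨n, hn⟩
    refine ⟨m + n, fun r hr => ?_⟩
    rw [smul_add, hm r (Ideal.pow_le_pow_right (Nat.le_add_right m n) hr),
      hn r (Ideal.pow_le_pow_right (Nat.le_add_left n m) hr), add_zero]
  smul_mem' := by
    rintro r x ⟨n, hn⟩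
    exact ⟨n, fun s hs => by rw [smul_comm, hn s hs, smul_zero]⟩

lemma map_mem_powTorsion (f : M →ₗ[R] N) {x : M} (hx : x ∈ powTorsion J M) :
    f x ∈ powTorsion J N :=
  hx.imp fun _ hn r hr => by rw [← map_smul, hn r hr, map_zero]

variable (J M) in
lemma powTorsion_powTorsion : powTorsion J (powTorsion J M) = ⊤ :=
  Submodule.eq_top_iff'.2 fun x => x.2.imp fun _ hn r hr => Subtype.ext (hn r hr)

lemma powTorsion_eq_top_of_surjective {f : M →ₗ[R] N} (hf : Function.Surjective f)
    (hM : powTorsion J M = ⊤) : powTorsion J N = ⊤ := by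
  refine Submodule.eq_top_iff'.2 fun y => ?_
  obtain ⟨x, rfl⟩ := hf y
  exact map_mem_powTorsion f (hM ▸ Submodule.mem_top)

lemma exists_pow_smul_eq_zero_of_fg {P : Submodule R M} (hP : P.FG) (hPJ : P ≤ powTorsion J M) :
    ∃ n : ℕ, ∀ r ∈ J ^ n, ∀ x ∈ P, r • x = 0 := by
  induction P, hP using Submodule.fg_induction with
  | singleton x =>
    obtain ⟨n, hn⟩ := hPJ (Submodule.mem_span_singleton_self x)
    refine ⟨n, fun r hr y hy => ?_⟩
    obtain ⟨a, rfl⟩ := Submodule.mem_span_singleton.1 hy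
    rw [smul_comm, hn r hr, smul_zero]
  | sup P Q _ _ ihP ihQ =>
    obtain ⟨m, hm⟩ := ihP (le_sup_left.trans hPJ)
    obtain ⟨n, hn⟩ := ihQ (le_sup_right.trans hPJ)
    refine ⟨m + n, fun r hr z hz => ?_⟩
    obtain ⟨x, hx, y, hy, rfl⟩ := Submodule.mem_sup.1 hz
    rw [smul_add, hm r (Ideal.pow_le_pow_right (Nat.le_add_right m n) hr) x hx,
      hn r (Ideal.pow_le_pow_right (Nat.le_add_left n m) hr) y hy, add_zero]

variable (M) in
lemma powTorsion_quotient_powTorsion (hJ : J.FG) : powTorsion J (M ⧸ powTorsion J M) = ⊥ := by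
  refine (Submodule.eq_bot_iff _).2 fun x hx => ?_
  induction x using Submodule.Quotient.induction_on with | _ x
  obtain ⟨m, hm⟩ := hx
  obtain ⟨n, hn⟩ := exists_pow_smul_eq_zero_of_fg (J := J)
    (P := Submodule.map (LinearMap.toSpanSingleton R M x) (J ^ m)) (Submodule.FG.map _ hJ.pow) <| by
      rintro _ ⟨r, hr, rfl⟩
      exact (Submodule.Quotient.mk_eq_zero _).1 (hm r hr)
  refine (Submodule.Quotient.mk_eq_zero _).2 ⟨n + m, fun r hr => ?_⟩
  rw [pow_add] at hr
  induction hr using Submodule.mul_induction_on' with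
  | mem_mul_mem s hs t ht => rw [mul_smul]; exact hn s hs _ ⟨t, ht, rfl⟩
  | add s _ t _ hs ht => rw [add_smul, hs, ht, add_zero]

section Injective

lemma exists_comap_pow_smul_top_le_ker [IsNoetherianRing R] [Module.Finite R M]
    (P : Submodule R M) (g : P →ₗ[R] N) (hN : powTorsion J N = ⊤) :
    ∃ n : ℕ, (J ^ n • (⊤ : Submodule R M)).comap P.subtype ≤ LinearMap.ker g := by
  obtain ⟨m, hm⟩ := exists_pow_smul_eq_zero_of_fg (Module.Finite.iff_fg.1 (Module.Finite.range g))
    (hN ▸ le_top : LinearMap.range g ≤ powTorsion J N)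
  obtain ⟨k, hk⟩ := J.exists_pow_inf_eq_pow_smul P
  have le_ker : J ^ m • (⊤ : Submodule R P) ≤ LinearMap.ker g :=
    Submodule.smul_le.2 fun r hr x _ => (g.map_smul r x).trans (hm r hr _ ⟨x, rfl⟩)
  refine ⟨m + k, fun x hx => le_ker ?_⟩
  have artin_rees : J ^ (m + k) • (⊤ : Submodule R M) ⊓ P ≤ J ^ m • P := by
    rw [hk _ (Nat.le_add_left k m), Nat.add_sub_cancel]
    exact smul_mono_right _ inf_le_right
  have hmap : (J ^ m • (⊤ : Submodule R P)).map P.subtype = J ^ m • P := by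
    rw [Submodule.map_smul'', Submodule.map_subtype_top]
  obtain ⟨y, hy, hyx⟩ := hmap.ge (artin_rees ⟨hx, x.2⟩)
  exact Subtype.ext hyx ▸ hy

lemma exists_comp_eq_of_ker_le_ker {E : Type*} [AddCommGroup E] [Module R E]
    (hE : Module.Baer R E) {q : M →ₗ[R] N} {g : M →ₗ[R] E}
    (h : LinearMap.ker q ≤ LinearMap.ker g) : ∃ φ : N →ₗ[R] E, φ ∘ₗ q = g := by
  obtain ⟨φ, hφ⟩ := hE.extension_property ((LinearMap.ker q).liftQ q le_rfl)
    (LinearMap.ker_eq_bot.1 (Submodule.ker_liftQ_eq_bot _ _ _ le_rfl))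
    ((LinearMap.ker q).liftQ g h)
  exact ⟨φ, LinearMap.ext fun x => LinearMap.congr_fun hφ (Submodule.Quotient.mk x)⟩

variable (J) in
lemma baer_powTorsion [IsNoetherianRing R] (hM : Module.Baer R M) :
    Module.Baer R (powTorsion J M) := by
  intro I g
  obtain ⟨n, hn⟩ := exists_comap_pow_smul_top_le_ker I g (powTorsion_powTorsion J M)
  obtain ⟨φ, hφ⟩ := exists_comp_eq_of_ker_le_ker hM (q := (J ^ n).mkQ ∘ₗ I.subtype)
    (g := (powTorsion J M).subtype ∘ₗ g) <| by
      intro x hx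
      have hxn : (x : R) ∈ J ^ n • (⊤ : Ideal R) := by
        rw [smul_eq_mul, Ideal.mul_top]
        exact Ideal.Quotient.eq_zero_iff_mem.1 hx
      have hgx : g x = 0 := hn hxn
      exact congr_arg Subtype.val hgx
  have hmem (r : R) : (φ ∘ₗ (J ^ n).mkQ) r ∈ powTorsion J M :=
    map_mem_powTorsion φ ⟨n, fun s hs =>
      Ideal.Quotient.eq_zero_iff_mem.2 (Ideal.mul_mem_right r _ hs)⟩
  exact ⟨LinearMap.codRestrict _ _ hmem, fun x hx =>
    Subtype.ext (LinearMap.congr_fun hφ ⟨x, hx⟩)⟩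

end Injective

end PowTorsion

section TorsionVanishing

open CategoryTheory Limits Opposite

universe u

variable {R : Type u} [CommRing R]

noncomputable section

namespace LocalCohomologyModule

section Zero

/-- Evaluation of morphisms `R/I ⟶ M` at the class of `1`. -/
def evalOne (I : Ideal R) (M : ModuleCat.{u} R) :
    ((linearYoneda R (ModuleCat.{u} R)).obj M).obj (op (ModuleCat.of R (R ⧸ I))) ⟶ M :=
  ModuleCat.ofHom (LinearMap.applyₗ 1 ∘ₗ (ModuleCat.homLinearEquiv (S := R)).toLinearMap)

lemma evalOne_injective (I : Ideal R) (M : ModuleCat.{u} R) :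
    Function.Injective (evalOne I M) := fun _ _ h =>
  ModuleCat.hom_ext (Submodule.linearMap_qext _ (LinearMap.ext_ring h))

lemma mem_range_evalOne {I : Ideal R} {M : ModuleCat.{u} R} {x : M} :
    x ∈ LinearMap.range (evalOne I M).hom ↔ ∀ r ∈ I, r • x = 0 := by
  constructor
  · rintro ⟨φ, rfl⟩ r hr
    refine (map_smul φ.hom r _).symm.trans ((congr_arg φ.hom ?_).trans (map_zero φ.hom))
    exact Ideal.Quotient.eq_zero_iff_mem.2 (by simpa using hr)
  · exact fun h => ⟨ModuleCat.ofHom (I.liftQ (LinearMap.toSpanSingleton R M x) h), one_smul R x⟩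

variable (J : Ideal R)

/-- The map `Ext⁰(R/Jⁿ, M) ≅ Hom(R/Jⁿ, M) → M`, the last arrow being evaluation at `1`. -/
def extZeroToModule (M : ModuleCat.{u} R) (k : ℕᵒᵖᵒᵖ) : (extSystem J 0 M).obj k ⟶ M :=
  (homIsoExtZero R (ModuleCat.of R (R ⧸ J ^ k.unop.unop)) M).inv ≫ evalOne (J ^ k.unop.unop) M

variable {J} in
lemma extZeroToModule_injective (M : ModuleCat.{u} R) (k : ℕᵒᵖᵒᵖ) :
    Function.Injective (extZeroToModule J M k) :=
  (evalOne_injective _ M).comp (homIsoExtZero R _ M).symm.toLinearEquiv.injective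

lemma extSystem_map_comp_extZeroToModule (M : ModuleCat.{u} R) {k l : ℕᵒᵖᵒᵖ} (f : k ⟶ l) :
    (extSystem J 0 M).map f ≫ extZeroToModule J M l = extZeroToModule J M k :=
  congr_arg (· ≫ evalOne (J ^ l.unop.unop) M) (homIsoExtZero_inv_naturality_left
    ((localCohomology.ringModIdeals (localCohomology.idealPowersDiagram J)).map f.unop) M)

variable (M : Type u) [AddCommGroup M] [Module R M]

/-- The comparison map `H⁰_J(M) → M`. -/
def toModule : LocalCohomologyModule J 0 M →ₗ[R] M :=
  ((isColimitCocone J 0 (ModuleCat.of R M)).desc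
    { pt := ModuleCat.of R M
      ι :=
        { app := extZeroToModule J (ModuleCat.of R M)
          naturality _ _ f := extSystem_map_comp_extZeroToModule J _ f } }).hom

lemma toModule_cocone_ι_app (k : ℕᵒᵖᵒᵖ) (x) :
    toModule J M ((cocone J 0 (ModuleCat.of R M)).ι.app k x) = extZeroToModule J _ k x :=
  ConcreteCategory.congr_hom ((isColimitCocone J 0 (ModuleCat.of R M)).fac _ k) x

lemma toModule_injective : Function.Injective (toModule J M) := by
  rw [injective_iff_map_eq_zero]
  intro y hy
  obtain ⟨k, x, rfl⟩ := exists_cocone_ι_app_eq J 0 y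
  rw [toModule_cocone_ι_app] at hy
  rw [extZeroToModule_injective _ k (hy.trans (map_zero _).symm)]
  exact map_zero _

lemma range_toModule : LinearMap.range (toModule J M) = powTorsion J M := by
  ext x
  constructor
  · rintro ⟨y, rfl⟩
    obtain ⟨k, x, rfl⟩ := exists_cocone_ι_app_eq J 0 y
    rw [toModule_cocone_ι_app]
    exact ⟨k.unop.unop, mem_range_evalOne.1 ⟨_, rfl⟩⟩
  · rintro ⟨n, hn⟩
    obtain ⟨φ, hφ⟩ := (mem_range_evalOne (M := ModuleCat.of R M)).2 hn
    refine ⟨(cocone J 0 _).ι.app (op (op n)) ((homIsoExtZero R _ _).hom φ),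
      (toModule_cocone_ι_app J M _ _).trans (.trans ?_ hφ)⟩
    exact congr_arg (evalOne _ _) (ConcreteCategory.congr_hom (homIsoExtZero R _ _).hom_inv_id φ)

variable {M} {N : Type u} [AddCommGroup N] [Module R N]

lemma toModule_map (f : M →ₗ[R] N) (y) : toModule J N (map J 0 f y) = f (toModule J M y) := by
  obtain ⟨k, x, rfl⟩ := exists_cocone_ι_app_eq J 0 y
  rw [toModule_cocone_ι_app]
  have h : map J 0 f ((cocone J 0 (ModuleCat.of R M)).ι.app k x) =
      (cocone J 0 (ModuleCat.of R N)).ι.app k ((extSystemMap J 0 (ModuleCat.ofHom f)).app k x) :=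
    ConcreteCategory.congr_hom (cocone_ι_app_comp_map J 0 (ModuleCat.ofHom f) k) x
  rw [h, toModule_cocone_ι_app]
  exact congr_arg (evalOne _ _) (ConcreteCategory.congr_hom
    (homIsoExtZero_inv_naturality_right _ (ModuleCat.ofHom f)) x)

end Zero

section Vanishing

variable (J : Ideal R)

lemma subsingleton_of_injective (E : Type u) [AddCommGroup E] [Module R E] [Module.Injective R E]
    (i : ℕ) : Subsingleton (LocalCohomologyModule J (i + 1) E) := by
  have : Injective (ModuleCat.of R E) := Module.injective_object_of_injective_module R E
  refine subsingleton_of_forall_eq 0 fun y => ?_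
  obtain ⟨k, x, rfl⟩ := exists_cocone_ι_app_eq J (i + 1) y
  have : Subsingleton ((extSystem J (i + 1) (ModuleCat.of R E)).obj k) :=
    ModuleCat.isZero_iff_subsingleton.1 (isZero_ext_succ_of_injective R _ _ i)
  rw [Subsingleton.elim x 0]
  exact map_zero _

variable {J} {K : Type u} [AddCommGroup K] [Module R K]

lemma map_zero_surjective (hK : powTorsion J K = ⊤) {M : Type u} [AddCommGroup M] [Module R M]
    {f : K →ₗ[R] M} (hf : Function.Surjective f) : Function.Surjective (map J 0 f) := fun y => by
  obtain ⟨x, hx⟩ := hf (toModule J M y)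
  obtain ⟨z, rfl⟩ : x ∈ LinearMap.range (toModule J K) := range_toModule J K ▸ hK.ge trivial
  exact ⟨z, toModule_injective J M ((toModule_map J f z).trans hx)⟩

variable [IsNoetherianRing R]

lemma exists_injective_powTorsion_eq_top (hK : powTorsion J K = ⊤) :
    ∃ (E : ModuleCat.{u} R) (f : K →ₗ[R] E), Module.Injective R E ∧ powTorsion J E = ⊤ ∧
      Function.Injective f := by
  let E : ModuleCat.{u} R := Injective.under (ModuleCat.of R K)
  let ι : ModuleCat.of R K ⟶ E := Injective.ι _
  have hι : Function.Injective ι := (ModuleCat.mono_iff_injective _).1 (Injective.ι_mono _)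
  have : Injective (ModuleCat.of R E) := Injective.injective_under _
  have hE : Module.Baer R E := .of_injective (Module.injective_module_of_injective_object R E)
  exact ⟨ModuleCat.of R (powTorsion J E),
    ι.hom.codRestrict _ fun x => map_mem_powTorsion ι.hom (hK.ge trivial),
    (baer_powTorsion J hE).injective, powTorsion_powTorsion J E,
    fun x y hxy => hι (congr_arg Subtype.val hxy)⟩

lemma subsingleton_of_powTorsion_eq_top {K : Type u} [AddCommGroup K] [Module R K]
    (hK : powTorsion J K = ⊤) (i : ℕ) : Subsingleton (LocalCohomologyModule J (i + 1) K) := by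
  obtain ⟨E, f, _, hE, hf⟩ := exists_injective_powTorsion_eq_top hK
  have hq := Submodule.mkQ_surjective (LinearMap.range f)
  have hfq := LinearMap.exact_map_mkQ_range f
  have := subsingleton_of_injective J E i
  have hδ : Function.Surjective (δ J hf hfq hq i) := fun y =>
    (exact_δ_map J hf hfq hq i y).1 (Subsingleton.elim _ _)
  refine subsingleton_of_forall_eq 0 (hδ.forall.2 fun x => ?_)
  suffices Function.Surjective (map J i (LinearMap.range f).mkQ) from
    (exact_map_δ J hf hfq hq i x).2 (this x)
  cases i with
  | zero => exact map_zero_surjective hE hq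
  | succ i =>
    have hQ : powTorsion J (E ⧸ LinearMap.range f) = ⊤ := powTorsion_eq_top_of_surjective hq hE
    have := subsingleton_of_powTorsion_eq_top hQ i
    exact Function.surjective_to_subsingleton _

end Vanishing

end LocalCohomologyModule

end

end TorsionVanishing

section CommutativeAlgebra

open scoped Pointwise

variable {R : Type*} [CommRing R] {A B C D E : Type*} [AddCommGroup A] [Module R A]
  [AddCommGroup B] [Module R B] [AddCommGroup C] [Module R C] [AddCommGroup D] [Module R D]
  [AddCommGroup E] [Module R E]

lemma annihilator_mul_annihilator_le_of_exact {f : A →ₗ[R] B} {g : B →ₗ[R] C}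
    (h : Function.Exact f g) :
    Module.annihilator R A * Module.annihilator R C ≤ Module.annihilator R B := by
  refine Ideal.mul_le.2 fun r hr s hs => Module.mem_annihilator.2 fun y => ?_
  obtain ⟨x, hx⟩ := (h (s • y)).1 (by rw [map_smul, Module.mem_annihilator.1 hs])
  rw [mul_smul, ← hx, ← map_smul, Module.mem_annihilator.1 hr, map_zero]

lemma length_eq_length_quotient_range_add_length_ker {a : A →ₗ[R] B} {f : B →ₗ[R] C}
    {g : C →ₗ[R] D} {b : D →ₗ[R] E} (haf : Function.Exact a f) (hfg : Function.Exact f g)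
    (hgb : Function.Exact g b) : Module.length R C =
      Module.length R (B ⧸ LinearMap.range a) + Module.length R (LinearMap.ker b) := by
  rw [← haf.linearMap_ker_eq, f.quotKerEquivRange.length_eq, ← hfg.linearMap_ker_eq,
    hgb.linearMap_ker_eq]
  refine Module.length_eq_add_of_exact (LinearMap.ker g).subtype g.rangeRestrict
    (Submodule.subtype_injective _) g.surjective_rangeRestrict ?_
  rw [LinearMap.exact_iff, LinearMap.ker_rangeRestrict, Submodule.range_subtype]

variable {M : Type*} [AddCommGroup M] [Module R M]

lemma exact_lsmul_mkQ (r : R) :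
    Function.Exact (LinearMap.lsmul R M r) (r • (⊤ : Submodule R M)).mkQ := by
  rw [LinearMap.exact_iff, Submodule.ker_mkQ]
  ext x
  simp [Submodule.mem_smul_pointwise_iff_exists]

lemma exists_pow_le_annihilator_of_isFiniteLength {J : Ideal R} (hJ : J ≤ (⊥ : Ideal R).jacobson)
    (hM : IsFiniteLength R M) : ∃ n : ℕ, J ^ n ≤ Module.annihilator R M := by
  obtain ⟨_, _⟩ := isFiniteLength_iff_isNoetherian_isArtinian.1 hM
  obtain ⟨n, hn⟩ := IsArtinian.monotone_stabilizes (R := R)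
    ⟨fun n => OrderDual.toDual (J ^ n • (⊤ : Submodule R M)),
      fun _ _ h => Submodule.smul_mono_left (Ideal.pow_le_pow_right h)⟩
  have stable : J ^ n • (⊤ : Submodule R M) = J • J ^ n • ⊤ := by
    rw [← Submodule.mul_smul, ← pow_succ']
    exact hn (n + 1) n.le_succ
  have eq_bot : J ^ n • (⊤ : Submodule R M) = ⊥ :=
    Submodule.eq_bot_of_le_smul_of_le_jacobson_bot J _ (IsNoetherian.noetherian _) stable.le hJ
  exact ⟨n, fun r hr => Module.mem_annihilator.2 fun x =>
    (Submodule.eq_bot_iff _).1 eq_bot _ (Submodule.smul_mem_smul hr Submodule.mem_top)⟩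

end CommutativeAlgebra

section AssociatedPrimes

open scoped Pointwise

variable {R : Type*} [CommRing R] {J : Ideal R} {M : Type*} [AddCommGroup M] [Module R M]

lemma coheight_le_of_mem_support {k : WithBot ℕ∞} (hk : Module.supportDim R M ≤ k)
    {p : PrimeSpectrum R} (hp : p ∈ Module.support R M) : (Order.coheight p : WithBot ℕ∞) ≤ k := by
  rw [Order.coheight_eq_krullDim_Ici]
  exact (Order.krullDim_le_of_strictMono
    (fun q : Set.Ici p => (⟨q.1, Module.mem_support_mono q.2 hp⟩ : Module.support R M))
    fun _ _ h => h).trans hk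

lemma quotSMulTop_map_subtype_torsionBySet_injective {y : R} (hy : IsSMulRegular M y) (s : Set R) :
    Function.Injective (QuotSMulTop.map y (Submodule.torsionBySet R M s).subtype) := by
  rw [injective_iff_map_eq_zero]
  intro l hl
  obtain ⟨l, rfl⟩ := Submodule.Quotient.mk_surjective _ l
  obtain ⟨w, -, hw : y • w = l⟩ := (Submodule.mem_smul_pointwise_iff_exists _ _ _).1
    ((Submodule.Quotient.mk_eq_zero _).1 hl)
  have hws : w ∈ Submodule.torsionBySet R M s := (Submodule.mem_torsionBySet_iff _ _).2 fun r =>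
    hy <| by
      simp only [smul_zero]
      rw [smul_comm, hw]
      exact (Submodule.mem_torsionBySet_iff _ _).1 l.2 r
  exact (Submodule.Quotient.mk_eq_zero _).2 <|
    (Submodule.mem_smul_pointwise_iff_exists _ _ _).2 ⟨⟨w, hws⟩, trivial, Subtype.ext hw⟩

lemma mk_mem_powTorsion_quotSMulTop (hJ : J.FG) {p : Ideal R} {z : M} (hz : ∀ r ∈ p, r • z = 0)
    {y : R} (hrad : J ≤ (p ⊔ Ideal.span {y}).radical) :
    (Submodule.Quotient.mk z : QuotSMulTop y M) ∈ powTorsion J (QuotSMulTop y M) := by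
  obtain ⟨n, hn⟩ := Ideal.exists_pow_le_of_le_radical_of_fg hrad hJ
  refine ⟨n, fun r hr => ?_⟩
  obtain ⟨a, ha, b, hb, rfl⟩ := Submodule.mem_sup.1 (hn hr)
  obtain ⟨c, rfl⟩ := Ideal.mem_span_singleton'.1 hb
  rw [← Submodule.Quotient.mk_smul, Submodule.Quotient.mk_eq_zero, add_smul, hz a ha, zero_add,
    mul_comm, mul_smul]
  exact Submodule.smul_mem_pointwise_smul _ _ _ Submodule.mem_top

variable [IsNoetherianRing R]

lemma exists_forall_mem_iff_smul_eq_zero {p : Ideal R}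
    (hp : p ∈ associatedPrimes R M) : ∃ z : M, ∀ r, r ∈ p ↔ r • z = 0 := by
  obtain ⟨-, z, hz⟩ := isAssociatedPrime_iff.1 hp
  exact ⟨z, fun r => by rw [hz, Submodule.mem_colon_singleton, Submodule.mem_bot]⟩

lemma powTorsion_eq_top_of_forall_associatedPrimes
    (h : ∀ p ∈ associatedPrimes R M, J ≤ p) : powTorsion J M = ⊤ := by
  refine Submodule.eq_top_iff'.2 fun x => ?_
  have hJ : J ≤ (Module.annihilator R (Submodule.span R {x})).radical := by
    rw [← Ideal.sInf_minimalPrimes]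
    exact le_sInf fun p hp => h p <| associatedPrimes.subset_of_injective
      (Submodule.subtype_injective _)
      (Module.associatedPrimes.minimalPrimes_annihilator_subset_associatedPrimes R _ hp)
  obtain ⟨n, hn⟩ := Ideal.exists_pow_le_of_le_radical_of_fg hJ (IsNoetherian.noetherian _)
  exact ⟨n, fun r hr => congr_arg Subtype.val
    (Module.mem_annihilator.1 (hn hr) ⟨x, Submodule.mem_span_singleton_self x⟩)⟩

lemma mem_associatedPrimes_quotient_powTorsion {p : Ideal R} (hp : p ∈ associatedPrimes R M)
    (hJ : ¬ J ≤ p) : p ∈ associatedPrimes R (M ⧸ powTorsion J M) := by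
  refine (associatedPrimes.subset_union_of_exact (powTorsion J M).subtype_injective
    (LinearMap.exact_subtype_mkQ _) hp).resolve_left fun h => hJ ?_
  obtain ⟨x, hx⟩ := exists_forall_mem_iff_smul_eq_zero h
  obtain ⟨n, hn⟩ := x.2
  exact h.1.le_of_pow_le fun r hr => (hx r).2 (Subtype.ext (hn r hr))

lemma exists_mem_isSMulRegular_of_powTorsion_eq_bot [Module.Finite R M] (h : powTorsion J M = ⊥) :
    ∃ y ∈ J, IsSMulRegular M y := by
  suffices Subsingleton ((R ⧸ J) →ₗ[R] M) by
    simpa only [Ideal.annihilator_quotient] using IsSMulRegular.subsingleton_linearMap_iff.1 this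
  refine subsingleton_of_forall_eq 0 fun φ => LinearMap.ext fun x => ?_
  refine (Submodule.eq_bot_iff _).1 h _ (map_mem_powTorsion φ ⟨1, fun r hr => ?_⟩)
  rw [pow_one] at hr
  induction x using Submodule.Quotient.induction_on with | _ x
  exact Ideal.Quotient.eq_zero_iff_mem.2 (Ideal.mul_mem_right x J hr)

lemma notMem_of_isSMulRegular {p : Ideal R} (hp : p ∈ associatedPrimes R M) {y : R}
    (hy : IsSMulRegular M y) : y ∉ p := fun hyp => by
  have : y ∈ ⋃ q ∈ associatedPrimes R M, (q : Set R) := Set.mem_biUnion hp hyp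
  rw [biUnion_associatedPrimes_eq_compl_regular] at this
  exact this hy

lemma annihilator_torsionBySet {p : Ideal R} (hp : p ∈ associatedPrimes R M) :
    Module.annihilator R (Submodule.torsionBySet R M (p : Set R)) = p := by
  obtain ⟨z, hz⟩ := exists_forall_mem_iff_smul_eq_zero hp
  refine le_antisymm (fun r hr => (hz r).2 ?_) fun r hr => Module.mem_annihilator.2 fun w => ?_
  · have hzp : z ∈ Submodule.torsionBySet R M (p : Set R) := by
      simpa only [Submodule.mem_torsionBySet_iff] using fun s : (p : Set R) => (hz s).1 s.2
    exact congr_arg Subtype.val (Module.mem_annihilator.1 hr ⟨z, hzp⟩)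
  · exact Subtype.ext ((Submodule.mem_torsionBySet_iff _ _).1 w.2 ⟨r, hr⟩)

lemma mem_associatedPrimes_quotSMulTop [Module.Finite R M] {p q : Ideal R} {y : R}
    (hp : p ∈ associatedPrimes R M) (hy : IsSMulRegular M y)
    (hq : q ∈ (p ⊔ Ideal.span {y}).minimalPrimes) : q ∈ associatedPrimes R (QuotSMulTop y M) := by
  let L := Submodule.torsionBySet R M (p : Set R)
  refine associatedPrimes.subset_of_injective
    (quotSMulTop_map_subtype_torsionBySet_injective hy (p : Set R))
    (Module.associatedPrimes.minimalPrimes_annihilator_subset_associatedPrimes R _ ?_)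
  have hrad := Module.support_quotSMulTop (M := L) y
  rw [Module.support_eq_zeroLocus, Module.support_eq_zeroLocus, annihilator_torsionBySet hp,
    ← PrimeSpectrum.zeroLocus_span {y}, ← PrimeSpectrum.zeroLocus_sup,
    PrimeSpectrum.zeroLocus_eq_iff] at hrad
  rwa [← Ideal.radical_minimalPrimes, hrad, Ideal.radical_minimalPrimes]

end AssociatedPrimes

section AnnihilatorLocalCohomology

open scoped Pointwise

universe u

variable {R : Type u} [CommRing R] {J : Ideal R} {M : Type u} [AddCommGroup M] [Module R M]

namespace LocalCohomologyModule

lemma smul_eq_zero_of_mem_powTorsion {r : R}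
    (hr : r ∈ Module.annihilator R (LocalCohomologyModule J 0 M)) {x : M}
    (hx : x ∈ powTorsion J M) : r • x = 0 := by
  obtain ⟨z, rfl⟩ : x ∈ LinearMap.range (toModule J M) := range_toModule J M ▸ hx
  rw [← map_smul, Module.mem_annihilator.1 hr, map_zero]

lemma annihilator_mul_annihilator_le_annihilator_quotSMulTop {y : R} (hy : IsSMulRegular M y)
    (i : ℕ) : Module.annihilator R (LocalCohomologyModule J i M) *
        Module.annihilator R (LocalCohomologyModule J (i + 1) M) ≤
      Module.annihilator R (LocalCohomologyModule J i (QuotSMulTop y M)) :=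
  annihilator_mul_annihilator_le_of_exact
    (exact_map_δ J (f := LinearMap.lsmul R M y) hy (exact_lsmul_mkQ y) (Submodule.mkQ_surjective _)
      i)

lemma exists_pow_le_annihilator_quotSMulTop {y : R} (hy : IsSMulRegular M y) {k : ℕ}
    (hM : ∀ i ≤ k + 1, ∃ n, J ^ n ≤ Module.annihilator R (LocalCohomologyModule J i M)) :
    ∀ i ≤ k, ∃ n, J ^ n ≤ Module.annihilator R (LocalCohomologyModule J i (QuotSMulTop y M)) := by
  intro i hi
  obtain ⟨m, hm⟩ := hM i (by omega)
  obtain ⟨n, hn⟩ := hM (i + 1) (by omega)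
  exact ⟨m + n, pow_add J m n ▸ (Ideal.mul_mono hm hn).trans
    (annihilator_mul_annihilator_le_annihilator_quotSMulTop hy i)⟩

variable [IsNoetherianRing R]

lemma map_mkQ_surjective {K : Submodule R M} (hK : powTorsion J K = ⊤) (i : ℕ) :
    Function.Surjective (map J i K.mkQ) := fun y =>
  have := subsingleton_of_powTorsion_eq_top hK i
  (exact_map_δ J K.subtype_injective (LinearMap.exact_subtype_mkQ K) K.mkQ_surjective i y).1
    (Subsingleton.elim _ _)

lemma map_mkQ_injective {K : Submodule R M} (hK : powTorsion J K = ⊤) (i : ℕ) :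
    Function.Injective (map J (i + 1) K.mkQ) := by
  rw [injective_iff_map_eq_zero]
  intro y hy
  have := subsingleton_of_powTorsion_eq_top hK i
  obtain ⟨z, rfl⟩ := (exact_map_map J K.subtype_injective (LinearMap.exact_subtype_mkQ K)
    K.mkQ_surjective (i + 1) y).1 hy
  rw [Subsingleton.elim z 0, map_zero]

variable [Module.Finite R M]

lemma annihilator_mul_annihilator_le_of_mem_associatedPrimes (hJ : J ≤ (⊥ : Ideal R).jacobson)
    {p : Ideal R} (hp : p ∈ associatedPrimes R M) {y : R} (hyJ : y ∈ J) (hy : IsSMulRegular M y)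
    (hrad : J ≤ (p ⊔ Ideal.span {y}).radical) :
    Module.annihilator R (LocalCohomologyModule J 0 M) *
      Module.annihilator R (LocalCohomologyModule J 1 M) ≤ p := by
  obtain ⟨z, hz⟩ := exists_forall_mem_iff_smul_eq_zero hp
  have hrad_pow (n : ℕ) : J ≤ (p ⊔ Ideal.span {y ^ n}).radical :=
    hrad.trans <| Ideal.radical_le_radical_iff.2 <| sup_le (le_sup_left.trans Ideal.le_radical) <|
      (Ideal.span_singleton_le_iff_mem _).2
        ⟨n, Ideal.mem_sup_right (Ideal.mem_span_singleton_self _)⟩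
  have hkrull : ⨅ n : ℕ, Ideal.span {y} ^ n • (⊤ : Submodule R M) = ⊥ :=
    Ideal.iInf_pow_smul_eq_bot_of_le_jacobson _
      ((Ideal.span_singleton_le_iff_mem _).2 (hJ hyJ))
  -- The annihilator of `H⁰(M/yⁿM)` is bounded below independently of `n`.
  refine fun r hr => (hz r).2 ((Submodule.eq_bot_iff _).1 hkrull _ ((Submodule.mem_iInf _).2 ?_))
  intro n
  have htors := mk_mem_powTorsion_quotSMulTop (IsNoetherian.noetherian J) (fun r => (hz r).1)
    (hrad_pow n)
  have hzero := smul_eq_zero_of_mem_powTorsion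
    (annihilator_mul_annihilator_le_annihilator_quotSMulTop (hy.pow n) 0 hr) htors
  rw [Ideal.span_singleton_pow, Submodule.ideal_span_singleton_smul]
  exact (Submodule.Quotient.mk_eq_zero _).1 hzero

lemma le_of_mem_associatedPrimes_of_coheight_le (hJ : J ≤ (⊥ : Ideal R).jacobson) {k : ℕ}
    (hM : ∀ i ≤ k, ∃ n, J ^ n ≤ Module.annihilator R (LocalCohomologyModule J i M))
    {p : PrimeSpectrum R} (hp : p.asIdeal ∈ associatedPrimes R M) (hk : Order.coheight p ≤ k) :
    J ≤ p.asIdeal := by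
  induction k generalizing M p with
  | zero =>
    have hmax : p.asIdeal.IsMaximal := PrimeSpectrum.isMax_iff.1
      (Order.coheight_eq_zero.1 (by simpa using hk))
    exact hJ.trans (sInf_le ⟨bot_le, hmax⟩)
  | succ k ih =>
    by_contra hJp
    let M' := M ⧸ powTorsion J M
    have hM' (i : ℕ) (hi : i ≤ k + 1) :
        ∃ n, J ^ n ≤ Module.annihilator R (LocalCohomologyModule J i M') :=
      (hM i hi).imp fun n hn => hn.trans <| LinearMap.annihilator_le_of_surjective _ <|
        map_mkQ_surjective (powTorsion_powTorsion J M) i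
    have hp' : p.asIdeal ∈ associatedPrimes R M' := mem_associatedPrimes_quotient_powTorsion hp hJp
    obtain ⟨y, hyJ, hy⟩ := exists_mem_isSMulRegular_of_powTorsion_eq_bot <|
      powTorsion_quotient_powTorsion M (IsNoetherian.noetherian J)
    have hrad : J ≤ (p.asIdeal ⊔ Ideal.span {y}).radical := by
      rw [← Ideal.sInf_minimalPrimes]
      refine le_sInf fun q hq => ?_
      have hpq : p < ⟨q, hq.1.1⟩ := lt_of_le_of_ne (le_sup_left.trans hq.1.2) fun h =>
        notMem_of_isSMulRegular hp' hy <| by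
          rw [h]; exact hq.1.2 (Ideal.mem_sup_right (Ideal.mem_span_singleton_self y))
      have hkq : Order.coheight (⟨q, hq.1.1⟩ : PrimeSpectrum R) ≤ k :=
        (ENat.add_le_add_iff_right (by simp)).1 ((Order.coheight_add_one_le hpq).trans hk)
      exact ih (exists_pow_le_annihilator_quotSMulTop hy hM')
        (mem_associatedPrimes_quotSMulTop hp' hy hq) hkq
    obtain ⟨m, hm⟩ := hM' 0 (by omega)
    obtain ⟨n, hn⟩ := hM' 1 (by omega)
    exact hJp <| p.2.le_of_pow_le <| pow_add J m n ▸ (Ideal.mul_mono hm hn).trans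
      (annihilator_mul_annihilator_le_of_mem_associatedPrimes hJ hp' hyJ hy hrad)

lemma powTorsion_torsionBy_eq_top (hJ : J ≤ (⊥ : Ideal R).jacobson) {k : ℕ}
    (hM : ∀ i ≤ k, ∃ n, J ^ n ≤ Module.annihilator R (LocalCohomologyModule J i M)) {g : R}
    (hg : Module.supportDim R (QuotSMulTop g M) ≤ k) :
    powTorsion J (Submodule.torsionBy R M g) = ⊤ := by
  refine powTorsion_eq_top_of_forall_associatedPrimes fun p hp => ?_
  have hpM := associatedPrimes.subset_of_injective (Submodule.subtype_injective _) hp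
  have hgp : g ∈ p := by
    obtain ⟨z, hz⟩ := exists_forall_mem_iff_smul_eq_zero hp
    exact (hz g).2 (Submodule.smul_torsionBy g z)
  have hsupp : (⟨p, hp.1⟩ : PrimeSpectrum R) ∈ Module.support R (QuotSMulTop g M) := by
    rw [Module.support_quotSMulTop]
    have hann : Module.annihilator R M ≤ p :=
      Submodule.annihilator_top.ge.trans hpM.annihilator_le
    exact ⟨Module.mem_support_iff_of_finite.2 hann, by simpa using hgp⟩
  exact le_of_mem_associatedPrimes_of_coheight_le hJ hM (p := ⟨p, hp.1⟩) hpM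
    (by exact_mod_cast coheight_le_of_mem_support hg hsupp)

end LocalCohomologyModule

end AnnihilatorLocalCohomology

section LengthQuotSMulTop

open scoped Pointwise

universe u

variable {R : Type u} [CommRing R] {J : Ideal R} {M : Type u}
  [AddCommGroup M] [Module R M]

section TorsionBy

variable (M) in
/-- The injection `M/(0 :_M g) → M` induced by multiplication by `g`. -/
def lsmulQuotTorsionBy (g : R) : (M ⧸ Submodule.torsionBy R M g) →ₗ[R] M :=
  (Submodule.torsionBy R M g).liftQ (LinearMap.lsmul R M g) le_rfl

lemma lsmulQuotTorsionBy_injective (g : R) : Function.Injective (lsmulQuotTorsionBy M g) :=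
  LinearMap.ker_eq_bot.1 (Submodule.ker_liftQ_eq_bot _ _ _ le_rfl)

lemma exact_lsmulQuotTorsionBy_mkQ (g : R) :
    Function.Exact (lsmulQuotTorsionBy M g) (g • (⊤ : Submodule R M)).mkQ :=
  (Function.Surjective.comp_exact_iff_exact (Submodule.mkQ_surjective _)).1 (exact_lsmul_mkQ g)

end TorsionBy

namespace LocalCohomologyModule

lemma map_lsmulQuotTorsionBy_comp_map_mkQ (i : ℕ) (g : R) :
    map J i (lsmulQuotTorsionBy M g) ∘ₗ map J i (Submodule.torsionBy R M g).mkQ =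
      LinearMap.lsmul R (LocalCohomologyModule J i M) g :=
  (map_comp J i _ _).symm.trans (map_lsmul J i g)

variable [IsNoetherianRing R] {g : R} (hg : powTorsion J (Submodule.torsionBy R M g) = ⊤)
include hg

lemma exact_lsmul_map_mkQ (i : ℕ) :
    Function.Exact (LinearMap.lsmul R (LocalCohomologyModule J i M) g)
      (map J i (g • (⊤ : Submodule R M)).mkQ) := by
  rw [← map_lsmulQuotTorsionBy_comp_map_mkQ]
  exact (Function.Surjective.comp_exact_iff_exact (map_mkQ_surjective hg i)).2 <|
    exact_map_map J (lsmulQuotTorsionBy_injective g) (exact_lsmulQuotTorsionBy_mkQ g)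
      (Submodule.mkQ_surjective _) i

lemma exists_exact_map_mkQ_exact_lsmul (i : ℕ) :
    ∃ δ : LocalCohomologyModule J i (QuotSMulTop g M) →ₗ[R] LocalCohomologyModule J (i + 1) M,
      Function.Exact (map J i (g • (⊤ : Submodule R M)).mkQ) δ ∧
      Function.Exact δ (LinearMap.lsmul R (LocalCohomologyModule J (i + 1) M) g) := by
  let e := LinearEquiv.ofBijective (map J (i + 1) (Submodule.torsionBy R M g).mkQ)
    ⟨map_mkQ_injective hg i, map_mkQ_surjective hg (i + 1)⟩
  have hα := lsmulQuotTorsionBy_injective (M := M) g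
  have hexact := exact_lsmulQuotTorsionBy_mkQ (M := M) g
  have hmkQ := Submodule.mkQ_surjective (g • (⊤ : Submodule R M))
  rw [← map_lsmulQuotTorsionBy_comp_map_mkQ]
  exact ⟨e.symm ∘ₗ δ J hα hexact hmkQ i,
    (Function.Injective.comp_exact_iff_exact e.symm.injective).2 (exact_map_δ J hα hexact hmkQ i),
    (LinearEquiv.conj_exact_iff_exact _ _ e.symm).2 (exact_δ_map J hα hexact hmkQ i)⟩

lemma length_quotSMulTop (i : ℕ) :
    Module.length R (LocalCohomologyModule J i (QuotSMulTop g M)) =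
      Module.length R (LocalCohomologyModule J i M ⧸
        LinearMap.range (LinearMap.lsmul R (LocalCohomologyModule J i M) g)) +
      Module.length R
        (LinearMap.ker (LinearMap.lsmul R (LocalCohomologyModule J (i + 1) M) g)) := by
  obtain ⟨_, hδ, hlsmul⟩ := exists_exact_map_mkQ_exact_lsmul hg i
  exact length_eq_length_quotient_range_add_length_ker (exact_lsmul_map_mkQ hg i) hδ hlsmul

end LocalCohomologyModule

end LengthQuotSMulTop

section CyclicModule

/-- The two presentations of the cyclic module `R/(g)`: as the quotient of `R` by `g • R`, and as
the quotient by the ideal generated by `g`. -/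
def quotSMulTopEquivQuotientSpanSingleton {R : Type*} [CommRing R] (g : R) :
    QuotSMulTop g R ≃ₗ[R] R ⧸ Ideal.span {g} :=
  Submodule.quotEquivOfEq _ _ <| by
    rw [← Submodule.ideal_span_singleton_smul, smul_eq_mul, Ideal.mul_top]

lemma supportDim_quotSMulTop_self {R : Type*} [CommRing R] (g : R) :
    Module.supportDim R (QuotSMulTop g R) = ringKrullDim (R ⧸ Ideal.span {g}) :=
  (Module.supportDim_eq_of_equiv (quotSMulTopEquivQuotientSpanSingleton g)).trans
    (Module.supportDim_quotient_eq_ringKrullDim _)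

lemma lcLen_eq_length (R : Type) [CommRing R] (J : Ideal R) (i : ℕ) (M : Type) [AddCommGroup M]
    [Module R M] : lcLen R J i M = Module.length R (LocalCohomologyModule J i M) :=
  (Module.coe_length R _).symm

lemma lcLen_quotient_span_singleton {R : Type} [CommRing R] (J : Ideal R) (i : ℕ) (g : R) :
    lcLen R J i (R ⧸ Ideal.span {g}) =
      Module.length R (LocalCohomologyModule J i (QuotSMulTop g R)) := by
  rw [lcLen_eq_length, ((localCohomology J i).mapIso
    (quotSMulTopEquivQuotientSpanSingleton g).toModuleIso).toLinearEquiv.length_eq]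

lemma exists_pow_le_annihilator_of_lcLen_eq {R : Type} [CommRing R] {J : Ideal R}
    (hJ : J ≤ (⊥ : Ideal R).jacobson) {i : ℕ} {M : Type} [AddCommGroup M] [Module R M]
    (hM : ∃ n : ℕ, lcLen R J i M = n) :
    ∃ n : ℕ, J ^ n ≤ Module.annihilator R (LocalCohomologyModule J i M) := by
  obtain ⟨n, hn⟩ := hM
  rw [lcLen_eq_length] at hn
  have hlength : Module.length R (LocalCohomologyModule J i M) = n := by exact_mod_cast hn
  exact exists_pow_le_annihilator_of_isFiniteLength hJ
    (Module.length_ne_top_iff.1 (hlength ▸ ENat.natCast_ne_top n))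

end CyclicModule

section General

universe u

theorem statement4_general {R : Type u} [CommRing R] [IsNoetherianRing R] {J : Ideal R}
    (hJ : J ≤ (⊥ : Ideal R).jacobson) {M : Type u} [AddCommGroup M] [Module R M]
    [Module.Finite R M] {k : ℕ}
    (hM : ∀ i ≤ k, ∃ n, J ^ n ≤ Module.annihilator R (LocalCohomologyModule J i M)) {f ε : R}
    (hε : ∀ i ≤ k, ε ∈ Module.annihilator R (LocalCohomologyModule J i M))
    (hf : Module.supportDim R (QuotSMulTop f M) ≤ k)
    (hfε : Module.supportDim R (QuotSMulTop (f + ε) M) ≤ k) {i : ℕ} (hi : i < k) :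
    Module.length R (LocalCohomologyModule J i (QuotSMulTop f M)) =
      Module.length R (LocalCohomologyModule J i (QuotSMulTop (f + ε) M)) := by
  have lsmul_eq (j : ℕ) (hj : j ≤ k) :
      LinearMap.lsmul R (LocalCohomologyModule J j M) (f + ε) = LinearMap.lsmul R _ f := by
    ext x
    simp only [LinearMap.lsmul_apply, add_smul, Module.mem_annihilator.1 (hε j hj), add_zero]
  rw [LocalCohomologyModule.length_quotSMulTop
      (LocalCohomologyModule.powTorsion_torsionBy_eq_top hJ hM hf),
    LocalCohomologyModule.length_quotSMulTop
      (LocalCohomologyModule.powTorsion_torsionBy_eq_top hJ hM hfε),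
    lsmul_eq i hi.le, lsmul_eq (i + 1) hi]

end General

theorem statement4 (R : Type) [CommRing R] [IsNoetherianRing R] [IsLocalRing R]
    (d : ℕ) (hd : 1 ≤ d) (hdim : ringKrullDim R = d)
    (hgcm : ∀ i < d, ∃ n : ℕ, lcLen R (maximalIdeal R) i R = n)
    (f : R) (hf : ringKrullDim (R ⧸ Ideal.span {f}) = ((d - 1 : ℕ) : WithBot ℕ∞))
    (ε : R) (hε : ε ∈ maximalIdeal R)
    (hann : ∀ i < d, ∀ y : ((localCohomology (maximalIdeal R) i).obj (ModuleCat.of R R)),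
      ε • y = 0)
    (hfε : ringKrullDim (R ⧸ Ideal.span {f + ε}) = ((d - 1 : ℕ) : WithBot ℕ∞)) :
    ∀ i < d - 1, lcLen R (maximalIdeal R) i (R ⧸ Ideal.span {f}) =
      lcLen R (maximalIdeal R) i (R ⧸ Ideal.span {f + ε}) := by
  intro i hi
  have hJ : maximalIdeal R ≤ (⊥ : Ideal R).jacobson := (jacobson_eq_maximalIdeal ⊥ bot_ne_top).ge
  rw [lcLen_quotient_span_singleton, lcLen_quotient_span_singleton, statement4_general hJ
    (fun j hj => exists_pow_le_annihilator_of_lcLen_eq hJ (hgcm j (by omega)))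
    (fun j hj => Module.mem_annihilator.2 (hann j (by omega)))
    ((supportDim_quotSMulTop_self f).trans hf).le
    ((supportDim_quotSMulTop_self (f + ε)).trans hfε).le hi]
end

section
/- Let (R, m) be a Cohen-Macaulay local ring of dimension d and I = (f_1,...,f_r) generated by a part of a system of parameters. Set N = (d−r)! · e(R/I) + 1. Then for all ε_1,...,ε_r ∈ m^N, the Hilbert functions of R/I and R/(f_1+ε_1,...,f_r+ε_r) are equal. -/
open IsLocalRing Filter

/-!
Write `𝔪` for the maximal ideal, `s = d - r` and `e = e(R / I)`. An ideal `X = (x_1, …, x_s)` with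
`𝔪 ^ (q + 1) ⊆ X 𝔪 ^ q + I` is a reduction of `𝔪` modulo `I`. As `R` is Cohen–Macaulay, `f, x` is
then regular in every order, so `X ^ k ∩ I = X ^ k I`, and `ℓ(R / (I + X ^ k 𝔪 ^ q))` is determined
by `I + X` and `I + 𝔪 ^ q`. If `f` is perturbed by elements of `𝔪 ^ (q + 2)`, then by Nakayama's
lemma `X` is still a reduction with the same `q` and neither of these two ideals changes, so the
Hilbert function is preserved.

It remains to find a reduction with `q + 1 ≤ s! e`. By the Eakin–Sathaye theorem, over an infinite
residue field such a reduction exists as soon as `ℓ(𝔪 ^ n / 𝔪 ^ (n + 1))`, computed in `R / I`, is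
less than `binom (n + s) s` for `n = q + 1`. This holds for some `n`, since the Hilbert–Samuel
function has degree `s`; the reduction so obtained has colength at most `e`, by regularity, and a
length estimate then gives the same inequality for `n = s! e`.

The residue field becomes infinite after flat base change to the Nagata ring. The Cohen–Macaulay
condition, given as the vanishing of local cohomology, is carried along as a regular sequence of
length `d`, and then as the vanishing of `Ext^i(k, R)` for `i < d`.
-/

/-- The length of `R ⧸ K` as an `R`-module. -/
noncomputable def colength {R : Type*} [CommRing R] (K : Ideal R) : ℕ∞ := Module.length R (R ⧸ K)

section Colength

open Ideal

variable {R : Type*} [CommRing R]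

theorem length_quotient_eq_comap_add_sup_range {M N : Type*} [AddCommGroup M] [Module R M]
    [AddCommGroup N] [Module R N] (f : M →ₗ[R] N) (K : Submodule R N) :
    Module.length R (N ⧸ K) =
      Module.length R (M ⧸ K.comap f) + Module.length R (N ⧸ (K ⊔ LinearMap.range f)) := by
  refine Module.length_eq_add_of_exact (Submodule.mapQ _ K f le_rfl)
    (Submodule.factor le_sup_left) ?_ (Submodule.factor_surjective _) ?_
  · rw [← LinearMap.ker_eq_bot, Submodule.ker_mapQ, Submodule.mkQ_map_self]
  · rw [LinearMap.exact_iff, Submodule.range_mapQ, Submodule.factor, Submodule.ker_mapQ,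
      Submodule.comap_id, Submodule.map_sup, Submodule.mkQ_map_self, bot_sup_eq]

lemma colength_eq_colon_add (K : Ideal R) (y : R) :
    colength K = colength (K.colon {y}) + colength (K ⊔ span {y}) := by
  have h := length_quotient_eq_comap_add_sup_range (LinearMap.toSpanSingleton R R y) K
  have hcomap : Submodule.comap (LinearMap.toSpanSingleton R R y) K = K.colon {y} :=
    Submodule.ext fun u => Submodule.mem_colon_singleton.symm
  rwa [hcomap, LinearMap.range_toSpanSingleton] at h

lemma colength_eq_length_add_sup (A K : Ideal R) :
    colength K = Module.length R (A ⧸ K.submoduleOf A) + colength (A ⊔ K) := by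
  have h := length_quotient_eq_comap_add_sup_range A.subtype K
  rwa [Submodule.range_subtype, sup_comm] at h

lemma colength_inf (A K : Ideal R) :
    colength (A ⊓ K) = Module.length R (A ⧸ K.submoduleOf A) + colength A := by
  have h := colength_eq_length_add_sup A (A ⊓ K)
  rwa [sup_inf_self, Submodule.submoduleOf, Submodule.comap_inf, Submodule.comap_subtype_self,
    top_inf_eq] at h

lemma colength_inf_add_colength_sup (A K : Ideal R) :
    colength (A ⊓ K) + colength (A ⊔ K) = colength A + colength K := by
  rw [colength_inf, colength_eq_length_add_sup A K]
  ring

lemma colength_add_colength_eq_inf_colon_add (K A : Ideal R) (y : R) :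
    colength K + colength A =
      colength (A ⊓ K.colon {y}) + colength (K ⊔ span {y} * A) := by
  have h := length_quotient_eq_comap_add_sup_range
    (LinearMap.toSpanSingleton R R y ∘ₗ A.subtype) K
  have hcomap : Submodule.comap (LinearMap.toSpanSingleton R R y ∘ₗ A.subtype) K =
      (K.colon {y}).submoduleOf A := Submodule.ext fun u => Submodule.mem_colon_singleton.symm
  have hrange : LinearMap.range (LinearMap.toSpanSingleton R R y ∘ₗ A.subtype) = span {y} * A := by
    ext x
    rw [mem_span_singleton_mul]
    simp [mul_comm]
  rw [hcomap, hrange] at h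
  rw [colength, h, colength_inf, add_right_comm]
  rfl

lemma colength_anti {K L : Ideal R} (h : K ≤ L) : colength L ≤ colength K := by
  rw [colength_eq_length_add_sup L K, sup_eq_left.2 h]
  exact le_add_self

lemma colength_top : colength (⊤ : Ideal R) = 0 :=
  Module.length_eq_zero_iff.2 (Ideal.Quotient.subsingleton_iff.2 rfl)

lemma le_of_colength_lt_one_add {K L : Ideal R} (h : K ≤ L)
    (hlt : colength K < 1 + colength L) : L ≤ K := by
  rw [colength_eq_length_add_sup L K, sup_eq_left.2 h] at hlt
  have hzero : Module.length R (L ⧸ K.submoduleOf L) = 0 := by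
    by_contra hne
    exact hlt.not_ge (add_le_add_left (Order.one_le_iff_ne_zero.2 hne) _)
  rwa [Module.length_eq_zero_iff, Submodule.Quotient.subsingleton_iff,
    Submodule.submoduleOf_eq_top] at hzero

lemma colength_le_add_sup_span_singleton {K A : Ideal R} {z : R} (h : span {z} * A ≤ K) :
    colength K ≤ colength A + colength (K ⊔ span {z}) := by
  rw [colength_eq_colon_add K z]
  gcongr
  refine colength_anti fun u hu => Submodule.mem_colon_singleton.2 ?_
  rw [smul_eq_mul, mul_comm]
  exact h (mul_mem_mul (mem_span_singleton_self z) hu)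

lemma colength_sup_span_singleton_pow_le (K : Ideal R) (z : R) (p : ℕ) :
    colength (K ⊔ span {z ^ p}) ≤ p * colength (K ⊔ span {z}) := by
  induction p with
  | zero => simp [colength_top]
  | succ p ih =>
    have hmul : span {z} * (K ⊔ span {z ^ p}) ≤ K ⊔ span {z ^ (p + 1)} := by
      rw [Ideal.mul_sup, span_singleton_mul_span_singleton, ← pow_succ']
      exact sup_le_sup_right mul_le_right _
    calc colength (K ⊔ span {z ^ (p + 1)})
        ≤ colength (K ⊔ span {z ^ p}) + colength (K ⊔ span {z ^ (p + 1)} ⊔ span {z}) :=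
          colength_le_add_sup_span_singleton hmul
      _ ≤ p * colength (K ⊔ span {z}) + colength (K ⊔ span {z}) :=
          add_le_add ih (colength_anti (sup_le_sup_right le_sup_left _))
      _ = (p + 1 : ℕ) * colength (K ⊔ span {z}) := by push_cast; ring

lemma span_image_insert {ι : Type*} (y : ι → R) (i : ι) (T : Set ι) :
    span (y '' insert i T) = span (y '' T) ⊔ span {y i} := by
  rw [Set.image_insert_eq, span_insert, sup_comm]

lemma colength_sup_span_image_pow_le {ι : Type*} (x : ι → R) (p : ℕ) (T : Finset ι)
    (K : Ideal R) :
    colength (K ⊔ span ((fun i => x i ^ p) '' T)) ≤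
      (p ^ T.card : ℕ) * colength (K ⊔ span (x '' T)) := by
  classical
  induction T using Finset.induction generalizing K with
  | empty => simp
  | insert a T ha ih =>
    rw [Finset.coe_insert, span_image_insert, span_image_insert, Finset.card_insert_of_notMem ha,
      ← sup_assoc, ← sup_assoc, sup_right_comm]
    calc _ ≤ ((p ^ T.card : ℕ) : ℕ∞) * colength (K ⊔ span {x a ^ p} ⊔ span (x '' T)) := ih _
      _ = (p ^ T.card : ℕ) * colength (K ⊔ span (x '' T) ⊔ span {x a ^ p}) := by
          rw [sup_right_comm]
      _ ≤ (p ^ T.card : ℕ) * (p * colength (K ⊔ span (x '' T) ⊔ span {x a})) := by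
          gcongr
          exact colength_sup_span_singleton_pow_le _ _ _
      _ = _ := by push_cast; ring

lemma inf_sup_mul_eq_mul_sup {I X : Ideal R} (h : X ⊓ I ≤ X * I) (a : Ideal R) :
    X ⊓ (I ⊔ X * a) = X * (I ⊔ a) := by
  refine le_antisymm ?_
    (le_inf mul_le_left ((Ideal.mul_sup X I a).trans_le (sup_le_sup_right mul_le_right _)))
  rw [← inf_sup_assoc_of_le I (mul_le_left : X * a ≤ X), Ideal.mul_sup]
  exact sup_le_sup_right h _

lemma colength_sup_mul {I X : Ideal R} (h : X ⊓ I ≤ X * I) (a : Ideal R) :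
    colength (I ⊔ X * a) =
      Module.length R (X ⧸ (X * (I ⊔ a)).submoduleOf X) + colength (X ⊔ I) := by
  rw [colength_eq_length_add_sup X, sup_left_comm, sup_eq_left.2 (mul_le_left : X * a ≤ X),
    sup_comm I X, ← inf_sup_mul_eq_mul_sup h, Submodule.submoduleOf, Submodule.submoduleOf,
    Submodule.comap_inf, Submodule.comap_subtype_self, top_inf_eq]

end Colength

section RegularModulo

open Ideal

variable {R : Type*} [CommRing R]

lemma sup_span_singleton_pow_succ_le (J : Ideal R) (a : R) (n : ℕ) :
    (J ⊔ span {a}) ^ (n + 1) ≤ J ^ (n + 1) ⊔ span {a} * (J ⊔ span {a}) ^ n := by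
  induction n with
  | zero => simp
  | succ n ih =>
    have hJ : J * (J ⊔ span {a}) ^ (n + 1) ≤
        J ^ (n + 1 + 1) ⊔ span {a} * (J ⊔ span {a}) ^ (n + 1) := by
      refine (mul_mono_right ih).trans ?_
      rw [Ideal.mul_sup]
      refine sup_le_sup (pow_succ' J (n + 1)).ge ?_
      rw [mul_left_comm, pow_succ' _ n]
      exact mul_mono_right (mul_mono_left le_sup_left)
    rw [pow_succ' (J ⊔ span {a}) (n + 1), Ideal.sup_mul]
    exact sup_le hJ le_sup_right

lemma sup_pow_sup_span_singleton_eq (Q J : Ideal R) (a : R) (n : ℕ) :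
    Q ⊔ (J ⊔ span {a}) ^ (n + 1) ⊔ span {a} = Q ⊔ span {a} ⊔ J ^ (n + 1) := by
  have hle : (J ⊔ span {a}) ^ (n + 1) ≤ J ^ (n + 1) ⊔ span {a} :=
    (sup_span_singleton_pow_succ_le J a n).trans
      (sup_le_sup_left (mul_le_left : span {a} * _ ≤ _) _)
  have hge : J ^ (n + 1) ≤ (J ⊔ span {a}) ^ (n + 1) := pow_right_mono le_sup_left _
  rw [sup_assoc, sup_right_comm, sup_assoc]
  exact congrArg (Q ⊔ ·)
    (le_antisymm (sup_le hle le_sup_right) (sup_le_sup_right hge _))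

lemma colon_sup_pow_succ {Q J : Ideal R} {a : R} (ha : ∀ n, IsSMulRegular (R ⧸ (Q ⊔ J ^ n)) a)
    (n : ℕ) : (Q ⊔ (J ⊔ span {a}) ^ (n + 1)).colon {a} = Q ⊔ (J ⊔ span {a}) ^ n := by
  simp only [isSMulRegular_quotient_iff_mem_of_smul_mem] at ha
  refine le_antisymm (fun u hu => ?_) (sup_le (fun u hu => ?_) fun u hu => ?_)
  · have hau : u * a ∈ Q ⊔ J ^ (n + 1) ⊔ span {a} * (J ⊔ span {a}) ^ n := by
      rw [sup_assoc]
      exact sup_le_sup_left (sup_span_singleton_pow_succ_le J a n) Q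
        (Submodule.mem_colon_singleton.1 hu)
    obtain ⟨w, hw, _, hz, hsum⟩ := Submodule.mem_sup.1 hau
    obtain ⟨v, hv, rfl⟩ := mem_span_singleton_mul.1 hz
    have huv : u - v ∈ Q ⊔ J ^ (n + 1) := by
      refine ha (n + 1) _ ?_
      rwa [show a • (u - v) = w by rw [smul_eq_mul]; linear_combination -hsum]
    have hle : Q ⊔ J ^ (n + 1) ≤ Q ⊔ (J ⊔ span {a}) ^ n :=
      sup_le_sup_left ((pow_le_pow_right n.le_succ).trans (pow_right_mono le_sup_left n)) _
    simpa using add_mem (hle huv) (mem_sup_right hv)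
  · exact Submodule.mem_colon_singleton.2 (mem_sup_left (Q.mul_mem_right _ hu))
  · refine Submodule.mem_colon_singleton.2 (mem_sup_right ?_)
    exact mul_mem_mul hu (mem_sup_right (mem_span_singleton_self a))

lemma colength_sup_pow_succ_succ {Q J : Ideal R} {a : R}
    (ha : ∀ n, IsSMulRegular (R ⧸ (Q ⊔ J ^ n)) a) (n : ℕ) :
    colength (Q ⊔ (J ⊔ span {a}) ^ (n + 1)) =
      colength (Q ⊔ (J ⊔ span {a}) ^ n) + colength (Q ⊔ span {a} ⊔ J ^ (n + 1)) := by
  rw [colength_eq_colon_add _ a, colon_sup_pow_succ ha, sup_pow_sup_span_singleton_eq]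

lemma isSMulRegular_quotient_sup_pow {Q J : Ideal R} {a b : R}
    (ha : ∀ n, IsSMulRegular (R ⧸ (Q ⊔ J ^ n)) a)
    (hb : ∀ n, IsSMulRegular (R ⧸ (Q ⊔ span {a} ⊔ J ^ n)) b) (n : ℕ) :
    IsSMulRegular (R ⧸ (Q ⊔ (J ⊔ span {a}) ^ n)) b := by
  simp only [isSMulRegular_quotient_iff_mem_of_smul_mem, smul_eq_mul] at hb ⊢
  induction n with
  | zero => simp
  | succ n ih =>
    intro u hu
    have hu' : u ∈ Q ⊔ J ^ (n + 1) ⊔ span {a} := by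
      rw [sup_right_comm]
      refine hb (n + 1) u ?_
      rw [← sup_pow_sup_span_singleton_eq]
      exact mem_sup_left hu
    obtain ⟨v, hv, _, hz, rfl⟩ := Submodule.mem_sup.1 hu'
    obtain ⟨w, rfl⟩ := mem_span_singleton'.1 hz
    have hle : Q ⊔ J ^ (n + 1) ≤ Q ⊔ (J ⊔ span {a}) ^ (n + 1) :=
      sup_le_sup_left (pow_right_mono le_sup_left _) _
    have hbw : b * w ∈ (Q ⊔ (J ⊔ span {a}) ^ (n + 1)).colon {a} := by
      refine Submodule.mem_colon_singleton.2 ?_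
      have h := sub_mem hu (Ideal.mul_mem_left _ b (hle hv))
      rwa [← mul_sub, add_sub_cancel_left, ← mul_assoc] at h
    rw [colon_sup_pow_succ ha] at hbw
    have hwa : w ∈ (Q ⊔ (J ⊔ span {a}) ^ (n + 1)).colon {a} := by
      rw [colon_sup_pow_succ ha]
      exact ih w hbw
    exact add_mem (hle hv) (Submodule.mem_colon_singleton.1 hwa)

lemma inf_sup_span_singleton_le_mul {P Q : Ideal R} {b : R} (hPQ : P ⊓ Q ≤ P * Q)
    (hb : IsSMulRegular (R ⧸ (P ⊔ Q)) b) : P ⊓ (Q ⊔ span {b}) ≤ P * (Q ⊔ span {b}) := by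
  rw [isSMulRegular_quotient_iff_mem_of_smul_mem] at hb
  rintro u ⟨huP, hu⟩
  obtain ⟨q, hq, _, hz, rfl⟩ := Submodule.mem_sup.1 hu
  obtain ⟨c, rfl⟩ := mem_span_singleton'.1 hz
  have hc : c ∈ P ⊔ Q := by
    refine hb c ?_
    have h := sub_mem (mem_sup_left (T := Q) huP) (mem_sup_right hq)
    rwa [add_sub_cancel_left, mul_comm] at h
  obtain ⟨p, hp, q', hq', rfl⟩ := Submodule.mem_sup.1 hc
  have hPQ' : q + q' * b ∈ P * Q := by
    refine hPQ ⟨?_, add_mem hq (Q.mul_mem_right _ hq')⟩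
    have h := sub_mem (SetLike.mem_coe.1 huP) (P.mul_mem_right b hp)
    rwa [add_mul, add_sub_assoc, add_sub_cancel_left] at h
  have hpb : p * b ∈ P * span {b} := mul_mem_mul hp (mem_span_singleton_self b)
  rw [Ideal.mul_sup, show q + (p + q') * b = q + q' * b + p * b by ring]
  exact Submodule.add_mem_sup hPQ' hpb

end RegularModulo

/-- A family of ring elements each of which is a nonzerodivisor modulo any set of the others, i.e.
a family which is a weakly regular sequence in every order. -/
def RegularFamily {R ι : Type*} [CommRing R] (y : ι → R) : Prop :=
  ∀ (T : Set ι) (i : ι), i ∉ T → IsSMulRegular (R ⧸ Ideal.span (y '' T)) (y i)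

lemma sumElim_image_map_inl {R α β : Type*} [Fintype α] (f : α → R) (x : β → R) :
    Sum.elim f x '' (Finset.univ.map .inl : Finset (α ⊕ β)) = Set.range f := by
  ext; simp

lemma sumElim_image_map_inr {R α β : Type*} [Fintype β] (f : α → R) (x : β → R) :
    Sum.elim f x '' (Finset.univ.map .inr : Finset (α ⊕ β)) = Set.range x := by
  ext; simp

namespace RegularFamily

open Ideal

variable {R ι : Type*} [CommRing R] {y : ι → R}

theorem isSMulRegular_span_sup_span_pow (hy : RegularFamily y) (T : Finset ι) {S : Set ι}
    (hTS : Disjoint (T : Set ι) S) {i : ι} (hiT : i ∉ T) (hiS : i ∉ S) (n : ℕ) :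
    IsSMulRegular (R ⧸ (span (y '' S) ⊔ span (y '' T) ^ n)) (y i) := by
  classical
  induction T using Finset.induction_on generalizing S i n with
  | empty =>
    cases n with
    | zero => simp [isSMulRegular_quotient_iff_mem_of_smul_mem]
    | succ n =>
      rw [Finset.coe_empty, Set.image_empty, span_empty, Ideal.bot_pow n.succ_ne_zero, sup_bot_eq]
      exact hy S i hiS
  | insert s T hs ih =>
    rw [Finset.mem_insert, not_or] at hiT
    rw [Finset.coe_insert, Set.disjoint_insert_left] at hTS
    rw [Finset.coe_insert, span_image_insert]
    refine isSMulRegular_quotient_sup_pow (ih hTS.2 hs hTS.1) (fun k => ?_) n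
    rw [← span_image_insert]
    refine ih (Set.disjoint_insert_right.2 ⟨hs, hTS.2⟩) hiT.2 ?_ k
    exact Set.mem_insert_iff.not.2 (not_or.2 ⟨hiT.1, hiS⟩)

theorem span_pow_inf_span_le_mul (hy : RegularFamily y) {T S : Finset ι} (hTS : Disjoint T S)
    (n : ℕ) : span (y '' T) ^ n ⊓ span (y '' S) ≤ span (y '' T) ^ n * span (y '' S) := by
  classical
  induction S using Finset.induction_on with
  | empty => simp
  | insert s S hs ih =>
    rw [Finset.disjoint_insert_right] at hTS
    rw [Finset.coe_insert, span_image_insert]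
    refine inf_sup_span_singleton_le_mul (ih hTS.2) ?_
    rw [sup_comm]
    exact hy.isSMulRegular_span_sup_span_pow T (Finset.disjoint_coe.2 hTS.2) hTS.1 hs n

theorem colength_span_sup_pow (hy : RegularFamily y) (T : Finset ι) {S : Set ι}
    (hTS : Disjoint (T : Set ι) S) (n : ℕ) :
    colength (span (y '' S) ⊔ span (y '' T) ^ (n + 1)) =
      ((n + T.card).choose T.card : ℕ) * colength (span (y '' S) ⊔ span (y '' T)) := by
  classical
  induction T using Finset.induction_on generalizing S n with
  | empty =>
    rw [Finset.coe_empty, Set.image_empty, span_empty, Ideal.bot_pow n.succ_ne_zero]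
    simp
  | insert s T hs ih =>
    rw [Finset.coe_insert, Set.disjoint_insert_left] at hTS
    have hregular := hy.isSMulRegular_span_sup_span_pow T hTS.2 hs hTS.1
    rw [Finset.coe_insert, span_image_insert, Finset.card_insert_of_notMem hs]
    induction n with
    | zero => simp
    | succ n ihn =>
      have hpascal : ((n + 1 + (T.card + 1)).choose (T.card + 1) : ℕ) =
          (n + (T.card + 1)).choose (T.card + 1) + (n + 1 + T.card).choose T.card := by
        rw [add_comm ((n + (T.card + 1)).choose _), Nat.succ_add_eq_add_succ n T.card,
          ← add_assoc, Nat.choose_succ_succ, add_right_comm]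
        rfl
      rw [colength_sup_pow_succ_succ hregular, ihn, ← span_image_insert y s S,
        ih (Set.disjoint_insert_right.2 ⟨hs, hTS.2⟩), span_image_insert, sup_right_comm,
        sup_assoc, ← add_mul, ← Nat.cast_add, hpascal]

section SumElim

variable {α β : Type*} {f : α → R} {x : β → R}

lemma span_range_pow_inf_le_mul [Finite α] [Finite β] (h : RegularFamily (Sum.elim f x)) (n : ℕ) :
    span (Set.range x) ^ n ⊓ span (Set.range f) ≤ span (Set.range x) ^ n * span (Set.range f) := by
  cases nonempty_fintype α
  cases nonempty_fintype β
  have hdisj : Disjoint (Finset.univ.map .inr) (Finset.univ.map .inl : Finset (α ⊕ β)) := by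
    simp [Finset.disjoint_left]
  have hle := h.span_pow_inf_span_le_mul hdisj n
  rwa [sumElim_image_map_inl, sumElim_image_map_inr] at hle

lemma colength_span_range_sup_pow [Finite α] [Fintype β] (h : RegularFamily (Sum.elim f x))
    (n : ℕ) :
    colength (span (Set.range f) ⊔ span (Set.range x) ^ (n + 1)) =
      ((n + Fintype.card β).choose (Fintype.card β) : ℕ) *
        colength (span (Set.range f) ⊔ span (Set.range x)) := by
  cases nonempty_fintype α
  have hdisj : Disjoint ((Finset.univ.map .inr : Finset (α ⊕ β)) : Set (α ⊕ β))
      (Finset.univ.map .inl : Finset (α ⊕ β)) := by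
    simp [Set.disjoint_left]
  have hcol := h.colength_span_sup_pow _ hdisj n
  rwa [sumElim_image_map_inl, sumElim_image_map_inr, Finset.card_map, Finset.card_univ] at hcol

end SumElim

end RegularFamily

section ResidueFieldExt

open CategoryTheory Abelian Pointwise

universe u

variable {R : Type u} [CommRing R] [IsLocalRing R]

variable (R) in
/-- `Ext^i(k, M) = 0` for all `i < n`, where `k` is the residue field. For a finite module `M ≠ 0`
over a Noetherian ring this says that `M` has depth at least `n`. -/
def ExtVanishing (n : ℕ) (M : Type u) [AddCommGroup M] [Module R M] : Prop :=
  ∀ i < n, Subsingleton (Ext (ModuleCat.of R (R ⧸ maximalIdeal R)) (ModuleCat.of R M) i)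

lemma isSMulRegular_iff_forall_notMem_of_isAssociatedPrime {A M : Type*} [CommRing A]
    [IsNoetherianRing A] [AddCommGroup M] [Module A M] {z : A} :
    IsSMulRegular M z ↔ ∀ p, IsAssociatedPrime p M → z ∉ p := by
  have h : z ∈ ⋃ p ∈ associatedPrimes A M, (p : Set A) ↔ ¬ IsSMulRegular M z := by
    rw [biUnion_associatedPrimes_eq_compl_regular]
    rfl
  rw [← not_iff_not, ← h]
  simp [associatedPrimes]

section Associated

variable {M : Type*} [AddCommGroup M] [Module R M] [IsNoetherianRing R] [Module.Finite R M] {z : R}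

lemma torsionBySet_eq_bot_of_le_smul_top (hzm : z ∈ maximalIdeal R) (hz : IsSMulRegular M z)
    (s : Set R) (h : Submodule.torsionBySet R M s ≤ z • ⊤) : Submodule.torsionBySet R M s = ⊥ := by
  refine Submodule.eq_bot_of_le_smul_of_le_jacobson_bot (maximalIdeal R) _
    (IsNoetherian.noetherian _) (fun u hu => ?_) (maximalIdeal_le_jacobson _)
  obtain ⟨v, -, rfl⟩ := Submodule.mem_smul_pointwise_iff_exists _ _ _ |>.1 (h hu)
  refine Submodule.smul_mem_smul hzm ((Submodule.mem_torsionBySet_iff s v).2 fun a => ?_)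
  have hav := (Submodule.mem_torsionBySet_iff s _).1 hu a
  rw [smul_comm] at hav
  exact hz.right_eq_zero_of_smul hav

lemma exists_isAssociatedPrime_quotSMulTop (hzm : z ∈ maximalIdeal R) (hz : IsSMulRegular M z)
    {p : Ideal R} (hp : IsAssociatedPrime p M) :
    ∃ q, IsAssociatedPrime q (QuotSMulTop z M) ∧ p ≤ q ∧ z ∈ q := by
  obtain ⟨u, hu, huz⟩ : ∃ u ∈ Submodule.torsionBySet R M p, u ∉ z • (⊤ : Submodule R M) := by
    by_contra! hle
    have hbot := torsionBySet_eq_bot_of_le_smul_top hzm hz p hle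
    obtain ⟨x, hx⟩ := (isAssociatedPrime_iff.1 hp).2
    have hxmem : x ∈ Submodule.torsionBySet R M p := by
      refine (Submodule.mem_torsionBySet_iff _ _).2 fun a => ?_
      exact (Submodule.mem_bot R).1 (Submodule.mem_colon_singleton.1 (hx.le a.2))
    rw [hbot, Submodule.mem_bot] at hxmem
    exact hp.isPrime.ne_top (by rw [hx, hxmem]; simp)
  obtain ⟨q, hq, hqu⟩ := exists_le_isAssociatedPrime_of_isNoetherianRing R
    (Submodule.Quotient.mk u : QuotSMulTop z M) (mt (Submodule.Quotient.mk_eq_zero _).1 huz)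
  refine ⟨q, hq, fun a ha => hqu ?_, hqu ?_⟩ <;>
    rw [Submodule.mem_colon_singleton, Submodule.mem_bot, ← Submodule.Quotient.mk_smul]
  · rw [(Submodule.mem_torsionBySet_iff _ _).1 hu ⟨a, ha⟩, Submodule.Quotient.mk_zero]
  · exact (Submodule.Quotient.mk_eq_zero _).2 (Submodule.smul_mem_pointwise_smul _ _ _ trivial)

end Associated

lemma ringKrullDim_quotient_add_one_le {A : Type*} [CommRing A] {p q : Ideal A} [p.IsPrime]
    (hpq : p ≤ q) {z : A} (hzq : z ∈ q) (hzp : z ∉ p) :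
    ringKrullDim (A ⧸ q) + 1 ≤ ringKrullDim (A ⧸ p) := by
  have hz : Ideal.Quotient.mk p z ∈ nonZeroDivisors (A ⧸ p) :=
    mem_nonZeroDivisors_iff_ne_zero.2 (mt Ideal.Quotient.eq_zero_iff_mem.1 hzp)
  refine le_trans ?_ (ringKrullDim_quotient_succ_le_of_nonZeroDivisor hz)
  gcongr
  refine ringKrullDim_le_of_surjective (Ideal.Quotient.lift _ (Ideal.Quotient.factor hpq) ?_)
    (Ideal.Quotient.lift_surjective_of_surjective _ _ (Ideal.Quotient.factor_surjective hpq))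
  intro a ha
  obtain ⟨b, rfl⟩ := Ideal.mem_span_singleton'.1 ha
  rw [map_mul, Ideal.Quotient.factor_mk, Ideal.Quotient.eq_zero_iff_mem.2 hzq, mul_zero]

lemma ringKrullDim_le_ncard_of_pow_le_span {A : Type*} [CommRing A] [IsLocalRing A]
    [IsNoetherianRing A] {s : Set A} (hs : s.Finite) (hsm : s ⊆ maximalIdeal A) {n : ℕ}
    (h : maximalIdeal A ^ n ≤ Ideal.span s) : ringKrullDim A ≤ s.ncard := by
  have hmin : maximalIdeal A ∈ (Ideal.span s).minimalPrimes := by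
    refine ⟨⟨inferInstance, Ideal.span_le.2 hsm⟩, fun q hq _ => ?_⟩
    have := hq.1
    exact Ideal.IsPrime.le_of_pow_le (h.trans hq.2)
  rw [← IsLocalRing.maximalIdeal_height_eq_ringKrullDim]
  exact_mod_cast Ideal.height_le_card_of_mem_minimalPrimes_span hs hmin

lemma ringKrullDim_quotient_le_ncard [IsNoetherianRing R] {p : Ideal R} (hp : p ≠ ⊤) {s : Set R}
    (hs : s.Finite) (hsm : s ⊆ maximalIdeal R) {n : ℕ}
    (h : maximalIdeal R ^ n ≤ p ⊔ Ideal.span s) : ringKrullDim (R ⧸ p) ≤ s.ncard := by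
  have : Nontrivial (R ⧸ p) := Ideal.Quotient.nontrivial_iff.2 hp
  have : IsLocalRing (R ⧸ p) := .of_surjective' _ Ideal.Quotient.mk_surjective
  have hmax : (maximalIdeal R).map (Ideal.Quotient.mk p) = maximalIdeal (R ⧸ p) :=
    IsLocalRing.map_maximalIdeal_of_surjective _ Ideal.Quotient.mk_surjective
  have hdim : ringKrullDim (R ⧸ p) ≤ (Ideal.Quotient.mk p '' s).ncard := by
    refine ringKrullDim_le_ncard_of_pow_le_span (n := n) (hs.image _) ?_ ?_
    · rintro _ ⟨x, hx, rfl⟩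
      exact hmax ▸ Ideal.mem_map_of_mem _ (hsm hx)
    · rw [← hmax, ← Ideal.map_pow]
      refine (Ideal.map_mono h).trans ?_
      rw [Ideal.map_sup, Ideal.map_quotient_self, bot_sup_eq, Ideal.map_span]
  exact hdim.trans (by exact_mod_cast Set.ncard_image_le hs)

namespace ExtVanishing

variable {M N : Type u} [AddCommGroup M] [Module R M] [AddCommGroup N] [Module R N] {n : ℕ}

lemma quotSMulTop (h : ExtVanishing R (n + 1) M) {z : R} (hz : IsSMulRegular M z) :
    ExtVanishing R n (QuotSMulTop z M) := by
  intro i hi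
  have hzero := AddCommGrpCat.isZero_of_iff_subsingleton.mpr (h i (by omega))
  have hzero_succ := AddCommGrpCat.isZero_of_iff_subsingleton.mpr (h (i + 1) (by omega))
  have hz' : IsSMulRegular (ModuleCat.of R M) z := hz
  exact AddCommGrpCat.subsingleton_of_isZero <| ShortComplex.Exact.isZero_of_both_zeros
    ((Ext.covariant_sequence_exact₃' _ hz'.smulShortComplex_shortExact) i (i + 1) rfl)
    (hzero.eq_zero_of_src _) (hzero_succ.eq_zero_of_tgt _)

lemma of_linearEquiv (h : ExtVanishing R n M) (e : M ≃ₗ[R] N) : ExtVanishing R n N := by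
  intro i hi
  have : Subsingleton ((extFunctorObj (ModuleCat.of R (R ⧸ maximalIdeal R)) i).obj
    (ModuleCat.of R M)) := h i hi
  exact (((extFunctorObj (ModuleCat.of R (R ⧸ maximalIdeal R)) i).mapIso
    e.toModuleIso).addCommGroupIsoToAddEquiv.symm).toEquiv.subsingleton

lemma exists_isSMulRegular [IsNoetherianRing R] [Module.Finite R M]
    (h : ExtVanishing R (n + 1) M) : ∃ z ∈ maximalIdeal R, IsSMulRegular M z := by
  have hext := h 0 n.succ_pos
  have : Subsingleton ((R ⧸ maximalIdeal R) →ₗ[R] M) :=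
    (Ext.addEquiv₀.trans (ModuleCat.homAddEquiv (M := ModuleCat.of R (R ⧸ maximalIdeal R))
      (N := ModuleCat.of R M))).symm.subsingleton
  simpa [Ideal.annihilator_quotient] using IsSMulRegular.subsingleton_linearMap_iff.1 this

theorem of_isWeaklyRegular [IsNoetherianRing R] (rs : List R)
    (mem : ∀ r ∈ rs, r ∈ maximalIdeal R)
    (reg : RingTheory.Sequence.IsWeaklyRegular R rs) : ExtVanishing R rs.length R := by
  have hlt : maximalIdeal R • (⊤ : Submodule R R) < ⊤ := by
    rw [smul_eq_mul, Ideal.mul_top, lt_top_iff_ne_top]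
    exact Ideal.IsPrime.ne_top'
  refine ModuleCat.subsingleton_ext_of_exists_isRegular (maximalIdeal R) _ ?_
    (ModuleCat.of R R) hlt rs mem ⟨reg, ?_⟩
  · rw [Module.support_eq_zeroLocus, Ideal.annihilator_quotient]
  · exact fun h => hlt.not_ge (h.le.trans (Submodule.smul_mono_left (Ideal.span_le.2 mem)))

theorem le_ringKrullDim_quotient [IsNoetherianRing R] [Module.Finite R M]
    (h : ExtVanishing R n M) {p : Ideal R} (hp : IsAssociatedPrime p M) :
    (n : WithBot ℕ∞) ≤ ringKrullDim (R ⧸ p) := by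
  have := hp.isPrime
  induction n generalizing M p with
  | zero => exact ringKrullDim_nonneg_of_nontrivial
  | succ n ih =>
    obtain ⟨z, hzm, hz⟩ := h.exists_isSMulRegular
    obtain ⟨q, hq, hpq, hzq⟩ := exists_isAssociatedPrime_quotSMulTop hzm hz hp
    calc ((n + 1 : ℕ) : WithBot ℕ∞) = n + 1 := by push_cast; rfl
      _ ≤ ringKrullDim (R ⧸ q) + 1 := by
          gcongr
          exact ih (h.quotSMulTop hz) hq hq.isPrime
      _ ≤ ringKrullDim (R ⧸ p) :=
          ringKrullDim_quotient_add_one_le hpq hzq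
            (isSMulRegular_iff_forall_notMem_of_isAssociatedPrime.1 hz p hp)

lemma quotient_sup_span_singleton {K : Ideal R} {b : R} (h : ExtVanishing R (n + 1) (R ⧸ K))
    (hb : IsSMulRegular (R ⧸ K) b) : ExtVanishing R n (R ⧸ (K ⊔ Ideal.span {b})) := by
  have hker : LinearMap.ker (Submodule.factor (le_sup_left : K ≤ K ⊔ Ideal.span {b})) =
      b • ⊤ := by
    rw [Submodule.factor, Submodule.ker_mapQ, Submodule.comap_id, Submodule.map_sup,
      Submodule.mkQ_map_self, bot_sup_eq, ← Submodule.ideal_span_singleton_smul,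
      ← Submodule.range_mkQ K, LinearMap.range_eq_map, ← Submodule.map_smul'', smul_eq_mul,
      Ideal.mul_top]
  exact (h.quotSMulTop hb).of_linearEquiv ((Submodule.quotEquivOfEq _ _ hker.symm).trans
    (LinearMap.quotKerEquivOfSurjective _ (Submodule.factor_surjective _)))

section Family

variable [IsNoetherianRing R] {ι : Type*} [Fintype ι] {y : ι → R}

lemma isSMulRegular_quotient_span (hy : ∀ i, y i ∈ maximalIdeal R) {n : ℕ}
    (hn : maximalIdeal R ^ n ≤ Ideal.span (Set.range y)) {T : Finset ι} {k : ℕ}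
    (hk : T.card + k + 1 = Fintype.card ι)
    (h : ExtVanishing R (k + 1) (R ⧸ Ideal.span (y '' T))) {i : ι} (hi : i ∉ T) :
    IsSMulRegular (R ⧸ Ideal.span (y '' T)) (y i) := by
  classical
  refine isSMulRegular_iff_forall_notMem_of_isAssociatedPrime.2 fun p hp hip => ?_
  have hTp : Ideal.span (y '' T) ≤ p := by
    refine le_trans ?_ hp.annihilator_le
    rw [Submodule.annihilator_top, Ideal.annihilator_quotient]
  let s : Finset R := (insert i T)ᶜ.image y
  have hspan : Ideal.span (Set.range y) ≤ p ⊔ Ideal.span s := by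
    refine Ideal.span_le.2 (Set.range_subset_iff.2 fun j => ?_)
    by_cases hj : j ∈ insert i T
    · refine Ideal.mem_sup_left ?_
      rcases Finset.mem_insert.1 hj with rfl | hj
      · exact hip
      · exact hTp (Ideal.subset_span ⟨j, hj, rfl⟩)
    · exact Ideal.mem_sup_right (Ideal.subset_span
        (Finset.mem_image_of_mem _ (Finset.mem_compl.2 hj)))
  have hs : (s : Set R) ⊆ maximalIdeal R := by
    intro x hx
    obtain ⟨j, -, rfl⟩ := Finset.mem_image.1 hx
    exact hy j
  have hcard : s.card ≤ k := by
    refine Finset.card_image_le.trans ?_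
    rw [Finset.card_compl, Finset.card_insert_of_notMem hi]
    omega
  have hdim := (h.le_ringKrullDim_quotient hp).trans
    (ringKrullDim_quotient_le_ncard hp.isPrime.ne_top s.finite_toSet hs (hn.trans hspan))
  rw [Set.ncard_coe_finset] at hdim
  norm_cast at hdim
  omega

lemma quotient_span_image (h : ExtVanishing R (Fintype.card ι) R)
    (hy : ∀ i, y i ∈ maximalIdeal R) {n : ℕ}
    (hn : maximalIdeal R ^ n ≤ Ideal.span (Set.range y)) (T : Finset ι) {k : ℕ}
    (hk : T.card + k = Fintype.card ι) : ExtVanishing R k (R ⧸ Ideal.span (y '' T)) := by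
  classical
  induction T using Finset.induction_on generalizing k with
  | empty =>
    rw [Finset.card_empty, zero_add] at hk
    subst hk
    exact h.of_linearEquiv (Submodule.quotEquivOfEqBot _ (by simp)).symm
  | insert i T hi ih =>
    rw [Finset.card_insert_of_notMem hi] at hk
    have hT := ih (k := k + 1) (by omega)
    rw [Finset.coe_insert, span_image_insert]
    exact hT.quotient_sup_span_singleton
      (isSMulRegular_quotient_span hy hn (by omega) hT hi)

theorem regularFamily (h : ExtVanishing R (Fintype.card ι) R) (hy : ∀ i, y i ∈ maximalIdeal R)
    {n : ℕ} (hn : maximalIdeal R ^ n ≤ Ideal.span (Set.range y)) : RegularFamily y := by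
  classical
  intro T i hi
  lift T to Finset ι using T.toFinite
  have hcard : T.card + 1 ≤ Fintype.card ι := by
    rw [← Finset.card_insert_of_notMem hi]
    exact Finset.card_le_univ _
  obtain ⟨k, hk⟩ := Nat.exists_eq_add_of_le hcard
  exact isSMulRegular_quotient_span hy hn (k := k) (by omega)
    (h.quotient_span_image hy hn T (by omega)) hi

end Family

end ExtVanishing

end ResidueFieldExt

section GenericLine

open Ideal

variable {R : Type*} [CommRing R]

lemma mem_span_range_mul_iff {ι : Type*} [Fintype ι] (a : ι → R) (B : Ideal R) (x : R) :
    x ∈ span (Set.range a) * B ↔ ∃ w : ι → R, (∀ i, w i ∈ B) ∧ ∑ i, a i * w i = x := by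
  constructor
  · intro hx
    rw [mul_comm, ← smul_eq_mul, span, Submodule.mem_ideal_smul_span_iff_exists_sum] at hx
    obtain ⟨w, hw, rfl⟩ := hx
    refine ⟨w, hw, ?_⟩
    rw [Finsupp.sum_fintype _ _ (by simp)]
    exact Finset.sum_congr rfl fun i _ => mul_comm _ _
  · rintro ⟨w, hw, rfl⟩
    exact sum_mem fun i _ => mul_mem_mul (subset_span (Set.mem_range_self i)) (hw i)

lemma mem_of_isUnit_of_mulVec_mem {κ : Type*} [Fintype κ] [DecidableEq κ] {P : Matrix κ κ R}
    (hP : IsUnit P) {u : κ → R} {L : Ideal R} (h : ∀ j, P.mulVec u j ∈ L) (j : κ) : u j ∈ L := by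
  obtain ⟨P', hP'⟩ := hP.exists_left_inv
  have hu : P'.mulVec (P.mulVec u) = u := by rw [Matrix.mulVec_mulVec, hP', Matrix.one_mulVec]
  rw [← hu]
  exact sum_mem fun l _ => L.mul_mem_left _ (h l)

variable [IsLocalRing R]

lemma exists_finset_forall_isUnit_one_add_smul {κ : Type*} [Fintype κ] [DecidableEq κ]
    (P : Matrix κ κ R) : ∃ F : Finset (ResidueField R), ∀ c : R, residue R c ∉ F →
      IsUnit (1 + c • P) := by
  classical
  obtain ⟨Q, hQ, hdet⟩ : ∃ Q : Polynomial (ResidueField R),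
      Q ≠ 0 ∧ ∀ c, Q.eval (residue R c) = residue R (1 + c • P).det := by
    refine ⟨(-(P.map (residue R))).charpolyRev, fun h => ?_, fun c => ?_⟩
    · simpa [h] using (-(P.map (residue R))).eval_charpolyRev
    · rw [← Polynomial.coe_evalRingHom, Matrix.charpolyRev, RingHom.map_det, RingHom.map_det]
      congr 1
      ext i j
      by_cases hij : i = j <;> simp [hij, mul_comm (residue R c)]
  refine ⟨Q.roots.toFinset, fun c hc => ?_⟩
  rw [Multiset.mem_toFinset, Polynomial.mem_roots hQ, Polynomial.IsRoot, hdet] at hc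
  exact (Matrix.isUnit_iff_isUnit_det _).2 ((residue_ne_zero_iff_isUnit _).1 hc)

-- If `u` generates `A`, substituting `a + c (b - a)` for `a` changes the expressions of the `u j`
-- modulo `K` by a matrix `1 + c P`, which is invertible for all but finitely many residues of `c`.
theorem exists_finset_forall_le_span_mul_sup {ι : Type*} [Finite ι] {A B K : Ideal R} (hA : A.FG)
    (hBA : maximalIdeal R * B ≤ A) {a b : ι → R} (ha : ∀ i, a i ∈ maximalIdeal R)
    (hb : ∀ i, b i ∈ maximalIdeal R) (h : A ≤ span (Set.range a) * B ⊔ K) :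
    ∃ F : Finset (ResidueField R), ∀ c : R, residue R c ∉ F →
      A ≤ span (Set.range fun i => a i + c * (b i - a i)) * B ⊔ K := by
  cases nonempty_fintype ι
  obtain ⟨p, u, rfl⟩ := Submodule.fg_iff_exists_fin_generating_family.1 hA
  have hu (j) : ∃ w : ι → R, (∀ i, w i ∈ B) ∧ u j - ∑ i, a i * w i ∈ K := by
    obtain ⟨x, hx, v, hv, hxv⟩ := Submodule.mem_sup.1 (h (Submodule.subset_span ⟨j, rfl⟩))
    obtain ⟨w, hw, rfl⟩ := (mem_span_range_mul_iff _ _ _).1 hx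
    exact ⟨w, hw, by rwa [← hxv, add_sub_cancel_left]⟩
  choose w hw hK using hu
  have hP (j) : ∃ P : Fin p → R, ∑ l, P l * u l = ∑ i, (b i - a i) * w j i :=
    mem_span_range_iff_exists_fun.1
      (hBA (sum_mem fun i _ => mul_mem_mul (sub_mem (hb i) (ha i)) (hw j i)))
  choose P hP using hP
  obtain ⟨F, hF⟩ := exists_finset_forall_isUnit_one_add_smul (Matrix.of P)
  refine ⟨F, fun c hc => span_le.2 (Set.range_subset_iff.2 ?_)⟩
  refine mem_of_isUnit_of_mulVec_mem (hF c hc) fun j => ?_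
  have hexpand : (1 + c • Matrix.of P).mulVec u j =
      ∑ i, (a i + c * (b i - a i)) * w j i + (u j - ∑ i, a i * w j i) := by
    rw [Matrix.add_mulVec, Matrix.one_mulVec, Matrix.smul_mulVec]
    simp only [Pi.add_apply, Pi.smul_apply, Matrix.mulVec, dotProduct, Matrix.of_apply, hP,
      smul_eq_mul, add_mul, mul_assoc, Finset.sum_add_distrib, Finset.mul_sum]
    ring
  rw [hexpand]
  exact add_mem (mem_sup_left ((mem_span_range_mul_iff _ _ _).2 ⟨w j, hw j, rfl⟩))
    (mem_sup_right (hK j))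

theorem exists_forall_le_span_mul_sup [Infinite (ResidueField R)] {ι κ : Type*} [Finite ι]
    {A B : Ideal R} (hA : A.FG) (hBA : maximalIdeal R * B ≤ A) (K : κ → Ideal R) (S : Finset κ)
    (h : ∀ j ∈ S, ∃ a : ι → R, (∀ i, a i ∈ maximalIdeal R) ∧ A ≤ span (Set.range a) * B ⊔ K j) :
    ∃ a : ι → R, (∀ i, a i ∈ maximalIdeal R) ∧
      ∀ j ∈ S, A ≤ span (Set.range a) * B ⊔ K j := by
  classical
  induction S using Finset.induction_on with
  | empty => exact ⟨0, fun _ => zero_mem _, by simp⟩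
  | insert j S _ ih =>
    rw [Finset.forall_mem_insert] at h
    obtain ⟨a, ha, haS⟩ := ih h.2
    obtain ⟨b, hb, hbj⟩ := h.1
    choose! F hF using fun l hl => exists_finset_forall_le_span_mul_sup hA hBA ha hb (haS l hl)
    obtain ⟨G, hG⟩ := exists_finset_forall_le_span_mul_sup hA hBA hb ha hbj
    obtain ⟨c, hc⟩ := Infinite.exists_notMem_finset (S.biUnion F ∪ G.image fun x => 1 - x)
    obtain ⟨c, rfl⟩ := residue_surjective c
    simp only [Finset.mem_union, Finset.mem_biUnion, Finset.mem_image, not_or, not_exists,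
      not_and] at hc
    refine ⟨fun i => a i + c * (b i - a i), fun i => add_mem (ha i)
      (Ideal.mul_mem_left _ _ (sub_mem (hb i) (ha i))),
      (Finset.forall_mem_insert _ _ _).2 ⟨?_, fun l hl => hF l hl c (hc.1 l hl)⟩⟩
    have hflip : (fun i => a i + c * (b i - a i)) = fun i => b i + (1 - c) * (a i - b i) := by
      ext i
      ring
    rw [hflip]
    exact hG (1 - c) fun hmem => hc.2 _ hmem (by rw [map_sub, map_one, sub_sub_cancel])

end GenericLine

section EakinSathaye

open Ideal

variable {R : Type*} [CommRing R]

lemma le_span_range_cons_mul_sup {A B K : Ideal R} {y : R} {s : ℕ} {z : Fin s → R}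
    (h : A ≤ span (Set.range z) * B ⊔ (K ⊔ span {y} * B)) :
    A ≤ span (Set.range (Fin.cons y z : Fin (s + 1) → R)) * B ⊔ K := by
  rwa [Fin.range_cons, span_insert, Ideal.sup_mul, sup_comm (span {y} * B), sup_assoc,
    sup_comm (span {y} * B)]

lemma colength_inf_colon_lt {K A : Ideal R} {y : R} {a b : ℕ∞} (hK : colength K < a + b)
    (hy : b ≤ colength (K ⊔ span {y} * A)) (hA : colength A ≠ ⊤) :
    colength (A ⊓ K.colon {y}) < a + colength A := by
  by_contra! hle
  refine hK.not_ge ((ENat.add_le_add_iff_right hA).1 ?_)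
  rw [colength_add_colength_eq_inf_colon_add K A y, add_right_comm]
  exact add_le_add hle hy

lemma span_range_mul_le_mul_sup {κ : Type*} {u : κ → R} {A B K X : Ideal R}
    (hBA : span (Set.range u) * B ≤ A) (h : ∀ j, A ≤ X * B ⊔ K.colon {u j}) :
    span (Set.range u) * A ≤ X * A ⊔ K := by
  rw [span, Submodule.span_range_eq_iSup, Ideal.iSup_mul]
  refine iSup_le fun j => ?_
  have huB : span {u j} * B ≤ A :=
    (mul_mono_left (span_mono (Set.singleton_subset_iff.2 (Set.mem_range_self j)))).trans hBA
  have huK : span {u j} * K.colon {u j} ≤ K := span_singleton_mul_le_iff.2 fun x hx =>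
    (mul_comm x _).symm ▸ Submodule.mem_colon_singleton.1 hx
  calc span {u j} * A ≤ span {u j} * (X * B ⊔ K.colon {u j}) := mul_mono_right (h j)
    _ = X * (span {u j} * B) ⊔ span {u j} * K.colon {u j} := by
        rw [Ideal.mul_sup, mul_left_comm]
    _ ≤ X * A ⊔ K := sup_le_sup (mul_mono_right huB) huK

variable [IsLocalRing R] [IsNoetherianRing R] [Infinite (ResidueField R)]

lemma exists_maximalIdeal_mul_le_span_mul_sup {s : ℕ} {A B K : Ideal R}
    (hBA : maximalIdeal R * B ≤ A)
    (h : ∀ y ∈ maximalIdeal R, ∃ z : Fin s → R, (∀ i, z i ∈ maximalIdeal R) ∧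
      A ≤ span (Set.range z) * B ⊔ K.colon {y}) :
    ∃ z : Fin s → R, (∀ i, z i ∈ maximalIdeal R) ∧
      maximalIdeal R * A ≤ span (Set.range z) * A ⊔ K := by
  obtain ⟨p, u, hu⟩ := Submodule.fg_iff_exists_fin_generating_family.1
    (IsNoetherian.noetherian (maximalIdeal R))
  have hmem (j) : u j ∈ maximalIdeal R := hu.le (Submodule.subset_span (Set.mem_range_self j))
  obtain ⟨z, hz, hle⟩ := exists_forall_le_span_mul_sup (IsNoetherian.noetherian A) hBA
    (fun j => K.colon {u j}) Finset.univ fun j _ => h (u j) (hmem j)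
  refine ⟨z, hz, ?_⟩
  rw [← hu] at hBA ⊢
  exact span_range_mul_le_mul_sup hBA fun j => hle j (Finset.mem_univ j)

-- Induction on `n` and `s` along Pascal's rule. Either some `y ∈ 𝔪` keeps the length of
-- `K + y 𝔪 ^ (n + 1)` small, and `y` is adjoined to the generators found for `s - 1`, or every
-- `K : y` has small length, and generators found for `n` are chosen uniformly in `y`.
-- For `n = 0` the exponent `n - 1` is also `0`.
theorem exists_pow_le_span_mul_pow_sup (n s : ℕ) (K : Ideal R)
    (hK₁ : maximalIdeal R ^ (n + 1) ≤ K) (hK₂ : K ≤ maximalIdeal R ^ n)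
    (hK : colength K < (n + s).choose s + colength (maximalIdeal R ^ n)) :
    ∃ z : Fin s → R, (∀ i, z i ∈ maximalIdeal R) ∧
      maximalIdeal R ^ n ≤ span (Set.range z) * maximalIdeal R ^ (n - 1) ⊔ K := by
  induction n generalizing s K with
  | zero => exact ⟨0, fun _ => zero_mem _,
      le_sup_of_le_right (le_of_colength_lt_one_add hK₂ (by simpa using hK))⟩
  | succ n ihn =>
    induction s generalizing K with
    | zero => exact ⟨0, fun _ => zero_mem _,
        le_sup_of_le_right (le_of_colength_lt_one_add hK₂ (by simpa using hK))⟩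
    | succ s ihs =>
      rw [Nat.add_sub_cancel]
      by_cases hcase : ∃ y ∈ maximalIdeal R, colength (K ⊔ span {y} * maximalIdeal R ^ n) <
          (n + 1 + s).choose s + colength (maximalIdeal R ^ (n + 1))
      · obtain ⟨y, hy, hlt⟩ := hcase
        have hyle : span {y} * maximalIdeal R ^ n ≤ maximalIdeal R ^ (n + 1) := by
          rw [pow_succ']
          exact mul_mono_left ((span_singleton_le_iff_mem _).2 hy)
        obtain ⟨z, hz, hle⟩ := ihs _ (hK₁.trans le_sup_left) (sup_le hK₂ hyle) hlt
        exact ⟨Fin.cons y z, Fin.cons hy hz, le_span_range_cons_mul_sup hle⟩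
      · push Not at hcase
        have hpascal : (((n + 1 + (s + 1)).choose (s + 1) : ℕ) : ℕ∞) =
            (n + (s + 1)).choose (s + 1) + (n + 1 + s).choose s := by
          rw [← Nat.add_assoc, Nat.choose_succ_succ, add_comm, Nat.cast_add, add_right_comm n 1 s]
          rfl
        have hfin : colength (maximalIdeal R ^ n) ≠ ⊤ := ne_top_of_le_ne_top hK.ne_top
          (colength_anti (hK₂.trans (pow_le_pow_right n.le_succ)))
        rw [hpascal, add_assoc] at hK
        rw [pow_succ']
        refine exists_maximalIdeal_mul_le_span_mul_sup (B := maximalIdeal R ^ (n - 1)) ?_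
          fun y hy => ?_
        · rw [← pow_succ']
          exact pow_le_pow_right (by omega)
        · have hcolon : maximalIdeal R ^ (n + 1) ≤ K.colon {y} := fun u hu =>
            Submodule.mem_colon_singleton.2 (hK₁ (by rw [pow_succ]; exact mul_mem_mul hu hy))
          obtain ⟨z, hz, hle⟩ := ihn (s + 1) (maximalIdeal R ^ n ⊓ K.colon {y})
            (le_inf (pow_le_pow_right n.le_succ) hcolon) inf_le_left
            (colength_inf_colon_lt hK (hcase y hy) hfin)
          exact ⟨z, hz, hle.trans (sup_le_sup_left inf_le_right _)⟩

end EakinSathaye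

section Asymptotics

open Topology
open scoped Nat

/-- `L n` grows like `e * n ^ s / s!`. When `L` is the Hilbert–Samuel function of a local ring of
dimension `s`, the number `e` is the multiplicity of the ring. -/
def HasMultiplicity (L : ℕ → ℕ) (s e : ℕ) : Prop :=
  Tendsto (fun n : ℕ => (L n : ℝ) * (s ! : ℕ) / (n : ℝ) ^ s) atTop (𝓝 (e : ℝ))

lemma succ_pow_le_factorial_mul_choose (k s : ℕ) : (k + 1) ^ s ≤ s ! * (k + s).choose s :=
  (Nat.pow_succ_le_ascFactorial _ _).trans_eq (Nat.ascFactorial_eq_factorial_mul_choose _ _)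

namespace HasMultiplicity

variable {L : ℕ → ℕ} {s e : ℕ}

lemma exists_lt_add_choose (h : HasMultiplicity L s e) (hL : 1 ≤ L 1) :
    ∃ n, L (n + 2) < L (n + 1) + (n + 1 + s).choose s := by
  by_contra! hle
  have hchoose (n : ℕ) : (n + 1 + s).choose (s + 1) ≤ L (n + 1) := by
    induction n with
    | zero => simpa [add_comm 1 s] using hL
    | succ n ih =>
      rw [add_right_comm (n + 1) 1 s, Nat.choose_succ_succ, add_comm]
      exact (add_le_add_left ih _).trans (hle n)
  have hpow (n : ℕ) (hn : 0 < n) : n ^ (s + 1) ≤ (s + 1)! * L n := by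
    obtain ⟨n, rfl⟩ := Nat.exists_eq_add_of_le' hn
    calc (n + 1) ^ (s + 1) ≤ (s + 1)! * (n + (s + 1)).choose (s + 1) :=
          succ_pow_le_factorial_mul_choose n (s + 1)
      _ ≤ (s + 1)! * L (n + 1) := by
          rw [← add_assoc, add_right_comm]
          exact Nat.mul_le_mul_left _ (hchoose n)
  have htop : Tendsto (fun n : ℕ => (n : ℝ) / (s + 1 : ℕ)) atTop atTop :=
    tendsto_natCast_atTop_atTop.atTop_div_const (by positivity)
  refine not_tendsto_atTop_of_tendsto_nhds h (tendsto_atTop_mono' _ ?_ htop)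
  filter_upwards [eventually_gt_atTop 0] with n hn
  have : (0 : ℝ) < n := Nat.cast_pos.2 hn
  rw [div_le_div_iff₀ (by positivity) (by positivity)]
  calc (n : ℝ) * n ^ s = ((n ^ (s + 1) : ℕ) : ℝ) := by push_cast; ring
    _ ≤ (((s + 1)! * L n : ℕ) : ℝ) := Nat.cast_le.2 (hpow n hn)
    _ = _ := by rw [Nat.factorial_succ]; push_cast; ring

lemma le_of_forall_choose_mul_le (h : HasMultiplicity L s e) {m l : ℕ}
    (hle : ∀ k, (k + s).choose s * l ≤ L (k + m)) : l ≤ e := by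
  have hpow (k : ℕ) : l * k ^ s ≤ L (k + m) * s ! := by
    calc l * k ^ s ≤ l * (k + 1) ^ s := by gcongr; exact k.le_succ
      _ ≤ l * (s ! * (k + s).choose s) := by
          gcongr
          exact succ_pow_le_factorial_mul_choose k s
      _ = (k + s).choose s * l * s ! := by ring
      _ ≤ L (k + m) * s ! := Nat.mul_le_mul_right _ (hle k)
  have hlim : Tendsto (fun k : ℕ => (l : ℝ) * ((k : ℝ) / (k + m)) ^ s) atTop (𝓝 l) := by
    simpa using ((tendsto_natCast_div_add_atTop (m : ℝ)).pow s).const_mul (l : ℝ)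
  have hle_lim : (l : ℝ) ≤ e := by
    refine le_of_tendsto_of_tendsto' hlim (h.comp (tendsto_add_atTop_nat m)) fun k => ?_
    rw [div_pow, ← mul_div_assoc, Function.comp_apply, Nat.cast_add]
    refine div_le_div_of_nonneg_right ?_ (by positivity)
    exact_mod_cast hpow k
  exact_mod_cast hle_lim

end HasMultiplicity

lemma pow_mul_add_lt_choose {t e : ℕ} (he : 1 ≤ e) :
    ((t + 1)! * e) ^ t * e + t < ((t + 1)! * e + (t + 1)).choose (t + 1) := by
  obtain ⟨p, hp⟩ : ∃ p, p = (t + 1)! * e := ⟨_, rfl⟩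
  rw [← hp]
  have hchoose : (p + t + 1) * p ^ t ≤ (t + 1)! * (p + (t + 1)).choose (t + 1) := by
    calc (p + t + 1) * p ^ t ≤ (p + t + 1) * (p + 1).ascFactorial t := by
          gcongr
          exact (Nat.pow_le_pow_left p.le_succ _).trans (Nat.pow_succ_le_ascFactorial _ _)
      _ = (t + 1)! * (p + (t + 1)).choose (t + 1) := by
          rw [← Nat.ascFactorial_eq_factorial_mul_choose, Nat.ascFactorial_succ]
          ring
  have hfactorial : t ! * t < p ^ t := by
    rcases Nat.eq_zero_or_pos t with rfl | ht
    · simp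
    · calc t ! * t < (t + 1) * t ! := by nlinarith [Nat.factorial_pos t]
        _ = (t + 1)! := (Nat.factorial_succ t).symm
        _ ≤ p := hp ▸ Nat.le_mul_of_pos_right _ he
        _ ≤ p ^ t := Nat.le_self_pow ht.ne' p
  refine lt_of_mul_lt_mul_left' (a := (t + 1)!) ?_
  calc (t + 1)! * (p ^ t * e + t) = p * p ^ t + (t + 1) * (t ! * t) := by
        rw [hp, Nat.factorial_succ]; ring
    _ < (p + t + 1) * p ^ t := by nlinarith
    _ ≤ _ := hchoose

end Asymptotics

section Local

open Ideal
open scoped Nat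

lemma sup_eq_sup_of_sup_eq_sup {α : Type*} [SemilatticeSup α] {a a' b c : α}
    (h : a ⊔ b = a' ⊔ b) (hbc : b ≤ c) : a ⊔ c = a' ⊔ c := by
  rw [← sup_eq_right.2 hbc, ← sup_assoc, h, sup_assoc]

variable {R : Type*} [CommRing R]

lemma span_range_sup_eq_of_sub_mem {ι : Type*} {f g : ι → R} {a : Ideal R}
    (h : ∀ i, f i - g i ∈ a) : span (Set.range f) ⊔ a = span (Set.range g) ⊔ a := by
  have hle {f g : ι → R} (h : ∀ i, f i - g i ∈ a) :
      span (Set.range f) ⊔ a ≤ span (Set.range g) ⊔ a := by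
    refine sup_le (span_le.2 (Set.range_subset_iff.2 fun i => ?_)) le_sup_right
    rw [← add_sub_cancel (g i) (f i)]
    exact Submodule.add_mem_sup (subset_span (Set.mem_range_self i)) (h i)
  exact le_antisymm (hle h) (hle fun i => by simpa using neg_mem (h i))

variable [IsLocalRing R]

lemma colength_maximalIdeal : colength (maximalIdeal R) = 1 := by
  rw [colength, Module.length_eq_one_iff, isSimpleModule_iff_isCoatom]
  exact (maximalIdeal.isMaximal R).out

lemma one_le_colength {K : Ideal R} (h : K ≤ maximalIdeal R) : 1 ≤ colength K :=
  colength_maximalIdeal.symm.le.trans (colength_anti h)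

lemma colength_le_card_add_sup_span_image {ι : Type*} (u : ι → R) (T : Finset ι) {K : Ideal R}
    (h : ∀ i ∈ T, span {u i} * maximalIdeal R ≤ K) :
    colength K ≤ T.card + colength (K ⊔ span (u '' T)) := by
  classical
  induction T using Finset.induction generalizing K with
  | empty => simp
  | insert b T hb ih =>
    rw [Finset.forall_mem_insert] at h
    rw [Finset.coe_insert, span_image_insert, Finset.card_insert_of_notMem hb]
    calc colength K ≤ 1 + colength (K ⊔ span {u b}) := by
          simpa only [colength_maximalIdeal] using colength_le_add_sup_span_singleton h.1
      _ ≤ 1 + (T.card + colength (K ⊔ span {u b} ⊔ span (u '' T))) :=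
          add_le_add_right (ih fun i hi => (h.2 i hi).trans le_sup_left) _
      _ = _ := by rw [sup_right_comm, ← sup_assoc, Nat.cast_succ]; ring

-- Filter by the elements `x i ^ p`, `i ≠ 0`, each of which adds at most one to the length modulo
-- `𝔪 ^ (p + 1)`, and then by `x 0`, which maps `𝔪 ^ p` to `𝔪 ^ (p + 1)`.
lemma colength_sup_pow_succ_le (I : Ideal R) {t : ℕ} {x : Fin (t + 1) → R}
    (hx : ∀ i, x i ∈ maximalIdeal R) (p : ℕ) :
    colength (I ⊔ maximalIdeal R ^ (p + 1)) ≤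
      t + (colength (I ⊔ maximalIdeal R ^ p) +
        (p ^ t : ℕ) * colength (I ⊔ span (Set.range x))) := by
  obtain ⟨U, hU⟩ : ∃ U, U = span (Set.range fun i : Fin t => x i.succ ^ p) := ⟨_, rfl⟩
  have hcard : colength (I ⊔ maximalIdeal R ^ (p + 1)) ≤
      t + colength (I ⊔ maximalIdeal R ^ (p + 1) ⊔ U) := by
    have hle := colength_le_card_add_sup_span_image (fun i : Fin t => x i.succ ^ p) Finset.univ
      (K := I ⊔ maximalIdeal R ^ (p + 1)) fun i _ => by
        rw [pow_succ]
        exact le_sup_of_le_right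
          (mul_mono_left ((span_singleton_le_iff_mem _).2 (pow_mem_pow (hx _) _)))
    simpa [hU] using hle
  have hzero : colength (I ⊔ maximalIdeal R ^ (p + 1) ⊔ U) ≤ colength (I ⊔ maximalIdeal R ^ p) +
      colength (I ⊔ maximalIdeal R ^ (p + 1) ⊔ U ⊔ span {x 0}) := by
    refine colength_le_add_sup_span_singleton (le_sup_of_le_left ?_)
    rw [Ideal.mul_sup, pow_succ']
    exact sup_le_sup mul_le_right (mul_mono_left ((span_singleton_le_iff_mem _).2 (hx 0)))
  have hpow : colength (I ⊔ span {x 0} ⊔ U) ≤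
      (p ^ t : ℕ) * colength (I ⊔ span (Set.range x)) := by
    have hle := colength_sup_span_image_pow_le (fun i : Fin t => x i.succ) p Finset.univ
      (I ⊔ span {x 0})
    rw [Finset.coe_univ, Set.image_univ, Set.image_univ, Finset.card_fin, ← hU] at hle
    rwa [Fin.range_fin_succ, span_insert, ← sup_assoc]
  have hanti : colength (I ⊔ maximalIdeal R ^ (p + 1) ⊔ U ⊔ span {x 0}) ≤
      colength (I ⊔ span {x 0} ⊔ U) :=
    colength_anti (by
      rw [sup_right_comm]
      exact sup_le_sup_right (sup_le_sup_right le_sup_left _) _)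
  exact hcard.trans (add_le_add_right (hzero.trans (add_le_add_right (hanti.trans hpow) _)) _)

variable [IsNoetherianRing R]

lemma le_of_le_sup_maximalIdeal_mul {A B : Ideal R} (h : A ≤ B ⊔ maximalIdeal R * A) : A ≤ B :=
  Submodule.le_of_le_smul_of_le_jacobson_bot (IsNoetherian.noetherian A)
    (maximalIdeal_le_jacobson _) h

lemma colength_maximalIdeal_pow_ne_top (n : ℕ) : colength (maximalIdeal R ^ n) ≠ ⊤ := by
  induction n with
  | zero => simp [colength_top]
  | succ n ih =>
    obtain ⟨T, hT⟩ := IsNoetherian.noetherian (maximalIdeal R ^ n)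
    have hle := colength_le_card_add_sup_span_image id T (K := maximalIdeal R ^ (n + 1))
      fun i hi => by
        rw [pow_succ]
        exact mul_mono_left ((span_singleton_le_iff_mem _).2 (hT ▸ subset_span hi))
    rw [Set.image_id, show span (T : Set R) = _ from hT,
      sup_eq_right.2 (pow_le_pow_right n.le_succ)] at hle
    exact ne_top_of_le_ne_top (by simpa using ih) hle

/-- The Hilbert–Samuel function `n ↦ ℓ(R / (I + 𝔪 ^ n))` of `R / I`, with values in `ℕ`. All these
lengths are finite when `R` is Noetherian. -/
noncomputable def hilbertSamuel (I : Ideal R) (n : ℕ) : ℕ :=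
  (colength (I ⊔ maximalIdeal R ^ n)).toNat

lemma natCast_hilbertSamuel (I : Ideal R) (n : ℕ) :
    (hilbertSamuel I n : ℕ∞) = colength (I ⊔ maximalIdeal R ^ n) :=
  ENat.natCast_toNat
    (ne_top_of_le_ne_top (colength_maximalIdeal_pow_ne_top n) (colength_anti le_sup_right))

lemma one_le_hilbertSamuel_one {I : Ideal R} (hI : I ≤ maximalIdeal R) :
    1 ≤ hilbertSamuel I 1 := by
  rw [← Nat.one_le_cast (α := ℕ∞), natCast_hilbertSamuel, pow_one]
  exact one_le_colength (sup_le hI le_rfl)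

lemma succ_le_colength_of_not_pow_le {I : Ideal R} {n : ℕ} (h : ¬ maximalIdeal R ^ n ≤ I) :
    ((n + 1 : ℕ) : ℕ∞) ≤ colength (I ⊔ maximalIdeal R ^ (n + 1)) := by
  induction n with
  | zero =>
    rw [pow_zero, one_eq_top, top_le_iff] at h
    simpa using one_le_colength (sup_le (le_maximalIdeal h) le_rfl)
  | succ n ih =>
    have hlt : 1 + colength (I ⊔ maximalIdeal R ^ (n + 1)) ≤
        colength (I ⊔ maximalIdeal R ^ (n + 1 + 1)) := by
      by_contra! hlt
      refine h (le_of_le_sup_maximalIdeal_mul ?_)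
      rw [← pow_succ']
      exact le_sup_right.trans
        (le_of_colength_lt_one_add (sup_le_sup_left (pow_le_pow_right (Nat.le_succ _)) _) hlt)
    rw [Nat.cast_succ, add_comm]
    exact (add_le_add_right (ih fun hle => h ((pow_le_pow_right n.le_succ).trans hle)) _).trans hlt

lemma maximalIdeal_pow_le_of_colength_le {I : Ideal R} {n : ℕ} (h : colength I ≤ n) :
    maximalIdeal R ^ n ≤ I := by
  by_contra hle
  have := (succ_le_colength_of_not_pow_le hle).trans ((colength_anti le_sup_left).trans h)
  exact n.not_succ_le_self (Nat.cast_le.1 this)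

lemma hilbertSamuel_succ_lt_add_choose {I : Ideal R} {s E : ℕ} {x : Fin s → R}
    (hx : ∀ i, x i ∈ maximalIdeal R) (hE : 1 ≤ E)
    (hlen : colength (I ⊔ span (Set.range x)) ≤ E) :
    hilbertSamuel I (s ! * E + 1) < hilbertSamuel I (s ! * E) + (s ! * E + s).choose s := by
  cases s with
  | zero =>
    rw [Set.range_eq_empty, span_empty, sup_bot_eq] at hlen
    have hI := maximalIdeal_pow_le_of_colength_le hlen
    rw [hilbertSamuel, hilbertSamuel, Nat.factorial_zero, one_mul, sup_eq_left.2 hI,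
      sup_eq_left.2 ((pow_le_pow_right E.le_succ).trans hI)]
    simp
  | succ t =>
    obtain ⟨p, hp⟩ : ∃ p, p = (t + 1)! * E := ⟨_, rfl⟩
    have hle : hilbertSamuel I (p + 1) ≤ t + (hilbertSamuel I p + p ^ t * E) := by
      rw [← Nat.cast_le (α := ℕ∞)]
      push_cast [natCast_hilbertSamuel]
      refine (colength_sup_pow_succ_le I hx p).trans ?_
      push_cast
      gcongr
    have hchoose := pow_mul_add_lt_choose (t := t) hE
    rw [← hp] at hchoose ⊢
    omega

end Local

section Reduction

open Ideal
open scoped Nat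

universe u

variable {R : Type u} [CommRing R] [IsLocalRing R]

/-- The image of `X` in `R / I` is a reduction of the maximal ideal `𝔪 / I`, with reduction number
at most `q`. -/
structure IsReductionModulo (I X : Ideal R) (q : ℕ) : Prop where
  le_maximalIdeal : X ≤ maximalIdeal R
  pow_succ_le : maximalIdeal R ^ (q + 1) ≤ X * maximalIdeal R ^ q ⊔ I

namespace IsReductionModulo

variable {I I' X : Ideal R} {q : ℕ}

lemma pow_succ_le_sup (h : IsReductionModulo I X q) : maximalIdeal R ^ (q + 1) ≤ I ⊔ X :=
  h.pow_succ_le.trans (sup_le (le_sup_of_le_right mul_le_left) le_sup_left)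

lemma pow_add_le (h : IsReductionModulo I X q) (k : ℕ) :
    maximalIdeal R ^ (q + k) ≤ X ^ k * maximalIdeal R ^ q ⊔ I := by
  induction k with
  | zero => simp
  | succ k ih =>
    calc maximalIdeal R ^ (q + (k + 1)) = maximalIdeal R * maximalIdeal R ^ (q + k) := by ring
      _ ≤ maximalIdeal R * (X ^ k * maximalIdeal R ^ q ⊔ I) := mul_mono_right ih
      _ = X ^ k * maximalIdeal R ^ (q + 1) ⊔ maximalIdeal R * I := by
          rw [Ideal.mul_sup]
          ring_nf
      _ ≤ X ^ k * (X * maximalIdeal R ^ q ⊔ I) ⊔ I :=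
          sup_le_sup (mul_mono_right h.pow_succ_le) mul_le_right
      _ = X ^ (k + 1) * maximalIdeal R ^ q ⊔ (X ^ k * I ⊔ I) := by
          rw [Ideal.mul_sup, ← mul_assoc, ← pow_succ, sup_assoc]
      _ = X ^ (k + 1) * maximalIdeal R ^ q ⊔ I := by
          rw [sup_eq_right.2 (mul_le_right : X ^ k * I ≤ I)]

lemma sup_pow_add_eq (h : IsReductionModulo I X q) (k : ℕ) :
    I ⊔ maximalIdeal R ^ (q + k) = I ⊔ X ^ k * maximalIdeal R ^ q := by
  refine le_antisymm (sup_le le_sup_left ((h.pow_add_le k).trans (sup_comm _ _).le))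
    (sup_le_sup_left ?_ _)
  rw [add_comm q, pow_add (maximalIdeal R)]
  exact mul_mono_left (pow_right_mono h.le_maximalIdeal _)

lemma of_le_sup_pow [IsNoetherianRing R] (h : IsReductionModulo I X q)
    (hI : I ≤ I' ⊔ maximalIdeal R ^ (q + 2)) : IsReductionModulo I' X q where
  le_maximalIdeal := h.le_maximalIdeal
  pow_succ_le := by
    refine le_of_le_sup_maximalIdeal_mul (h.pow_succ_le.trans ?_)
    rw [← pow_succ', sup_assoc]
    exact sup_le_sup_left hI _

end IsReductionModulo

section SystemOfParameters

variable {r s q : ℕ} {f : Fin r → R} {x : Fin s → R}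

lemma colength_sup_pow_add_succ (hreg : RegularFamily (Sum.elim f x))
    (hred : IsReductionModulo (span (Set.range f)) (span (Set.range x)) q) (k : ℕ) :
    colength (span (Set.range f) ⊔ maximalIdeal R ^ (q + (k + 1))) =
      Module.length R (↥(span (Set.range x) ^ (k + 1)) ⧸
        (span (Set.range x) ^ (k + 1) *
          (span (Set.range f) ⊔ maximalIdeal R ^ q)).submoduleOf (span (Set.range x) ^ (k + 1))) +
      ((k + s).choose s : ℕ) * colength (span (Set.range f) ⊔ span (Set.range x)) := by
  rw [hred.sup_pow_add_eq, colength_sup_mul (hreg.span_range_pow_inf_le_mul (k + 1)),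
    sup_comm (span (Set.range x) ^ (k + 1)), hreg.colength_span_range_sup_pow, Fintype.card_fin]

lemma hilbertSamuel_eq_of_isReductionModulo {g : Fin r → R}
    (hf : RegularFamily (Sum.elim f x)) (hg : RegularFamily (Sum.elim g x))
    (hfred : IsReductionModulo (span (Set.range f)) (span (Set.range x)) q)
    (hgred : IsReductionModulo (span (Set.range g)) (span (Set.range x)) q)
    (hfg : span (Set.range f) ⊔ maximalIdeal R ^ (q + 1) =
      span (Set.range g) ⊔ maximalIdeal R ^ (q + 1)) :
    hilbertSamuel (span (Set.range f)) = hilbertSamuel (span (Set.range g)) := by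
  ext n
  rw [hilbertSamuel, hilbertSamuel]
  rcases le_or_gt n q with hn | hn
  · rw [sup_eq_sup_of_sup_eq_sup hfg (pow_le_pow_right (hn.trans q.le_succ))]
  · obtain ⟨k, rfl⟩ := Nat.exists_eq_add_of_lt hn
    have hX : span (Set.range f) ⊔ span (Set.range x) =
        span (Set.range g) ⊔ span (Set.range x) := by
      refine le_antisymm (sup_le ?_ le_sup_right) (sup_le ?_ le_sup_right)
      · exact (le_sup_left.trans hfg.le).trans (sup_le le_sup_left hgred.pow_succ_le_sup)
      · exact (le_sup_left.trans hfg.ge).trans (sup_le le_sup_left hfred.pow_succ_le_sup)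
    rw [add_assoc, colength_sup_pow_add_succ hf hfred, colength_sup_pow_add_succ hg hgred, hX,
      sup_eq_sup_of_sup_eq_sup hfg (pow_le_pow_right q.le_succ)]

variable [IsNoetherianRing R]

lemma colength_sup_le_of_hasMultiplicity {E : ℕ} (hreg : RegularFamily (Sum.elim f x))
    (hred : IsReductionModulo (span (Set.range f)) (span (Set.range x)) q)
    (hE : HasMultiplicity (hilbertSamuel (span (Set.range f))) s E) :
    colength (span (Set.range f) ⊔ span (Set.range x)) ≤ E := by
  have hle (k : ℕ) : ((k + s).choose s : ℕ) *
      colength (span (Set.range f) ⊔ span (Set.range x)) ≤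
        hilbertSamuel (span (Set.range f)) (k + (q + 1)) := by
    rw [natCast_hilbertSamuel, show k + (q + 1) = q + (k + 1) by ring,
      colength_sup_pow_add_succ hreg hred]
    exact le_add_self
  have hfin : colength (span (Set.range f) ⊔ span (Set.range x)) ≠ ⊤ :=
    ne_top_of_le_ne_top (ENat.natCast_ne_top _) (by simpa using hle 0)
  lift colength (span (Set.range f) ⊔ span (Set.range x)) to ℕ using hfin with l
  exact_mod_cast hE.le_of_forall_choose_mul_le fun k => by exact_mod_cast hle k

end SystemOfParameters

lemma exists_isReductionModulo [IsNoetherianRing R] [Infinite (ResidueField R)] (I : Ideal R)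
    {n s : ℕ} (h : hilbertSamuel I (n + 2) < hilbertSamuel I (n + 1) + (n + 1 + s).choose s) :
    ∃ x : Fin s → R, IsReductionModulo I (span (Set.range x)) n := by
  have hle : maximalIdeal R ^ (n + 2) ≤ maximalIdeal R ^ (n + 1) :=
    pow_le_pow_right (Nat.le_succ _)
  have hmod :=
    colength_inf_add_colength_sup (maximalIdeal R ^ (n + 1)) (I ⊔ maximalIdeal R ^ (n + 2))
  rw [sup_left_comm, sup_eq_left.2 hle, ← natCast_hilbertSamuel, ← natCast_hilbertSamuel] at hmod
  have hK : colength (maximalIdeal R ^ (n + 1) ⊓ (I ⊔ maximalIdeal R ^ (n + 2))) <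
      (n + 1 + s).choose s + colength (maximalIdeal R ^ (n + 1)) := by
    rw [← ENat.add_lt_add_iff_right (ENat.natCast_ne_top (hilbertSamuel I (n + 1))), hmod,
      add_comm (colength _), add_right_comm]
    refine (ENat.add_lt_add_iff_right (colength_maximalIdeal_pow_ne_top _)).2 ?_
    rw [add_comm (_ : ℕ∞) (hilbertSamuel I (n + 1) : ℕ∞)]
    exact_mod_cast h
  obtain ⟨x, hx, hxle⟩ := exists_pow_le_span_mul_pow_sup (n + 1) s _ (le_inf hle le_sup_right)
    inf_le_left hK
  refine ⟨x, span_le.2 (Set.range_subset_iff.2 hx),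
    le_of_le_sup_maximalIdeal_mul (hxle.trans ?_)⟩
  rw [← pow_succ', sup_assoc]
  exact sup_le_sup_left inf_le_right _

section InfiniteResidueField

variable [IsNoetherianRing R] {r s E : ℕ} {f : Fin r → R}

lemma ExtVanishing.regularFamily_sumElim {q : ℕ} {x : Fin s → R} (h : ExtVanishing R (r + s) R)
    (hf : span (Set.range f) ≤ maximalIdeal R)
    (hx : IsReductionModulo (span (Set.range f)) (span (Set.range x)) q) :
    RegularFamily (Sum.elim f x) := by
  refine ExtVanishing.regularFamily (n := q + 1) (by simpa using h) ?_ ?_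
  · rintro (i | i)
    exacts [hf (subset_span ⟨i, rfl⟩), hx.le_maximalIdeal (subset_span ⟨i, rfl⟩)]
  · rw [Set.Sum.elim_range, span_union]
    exact hx.pow_succ_le_sup

variable [Infinite (ResidueField R)]

-- Some reduction exists because the Hilbert–Samuel function grows like a polynomial of degree `s`.
-- By regularity its colength is at most `E`, and this bound forces slow growth at `s! * E`.
theorem exists_isReductionModulo_of_hasMultiplicity (h : ExtVanishing R (r + s) R)
    (hf : span (Set.range f) ≤ maximalIdeal R)
    (hE : HasMultiplicity (hilbertSamuel (span (Set.range f))) s E) :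
    ∃ q, q + 1 = s ! * E ∧
      ∃ x : Fin s → R, IsReductionModulo (span (Set.range f)) (span (Set.range x)) q := by
  obtain ⟨n, hn⟩ := hE.exists_lt_add_choose (one_le_hilbertSamuel_one hf)
  obtain ⟨x, hx⟩ := exists_isReductionModulo _ hn
  have hlen := colength_sup_le_of_hasMultiplicity (h.regularFamily_sumElim hf hx) hx hE
  have hE₁ : 1 ≤ E := Nat.cast_le.1 ((one_le_colength (sup_le hf hx.le_maximalIdeal)).trans hlen)
  obtain ⟨q, hq⟩ := Nat.exists_eq_succ_of_ne_zero
    (Nat.mul_ne_zero s.factorial_ne_zero (Nat.one_le_iff_ne_zero.1 hE₁))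
  refine ⟨q, hq.symm, exists_isReductionModulo _ ?_⟩
  simpa only [hq] using hilbertSamuel_succ_lt_add_choose
    (fun i => hx.le_maximalIdeal (subset_span ⟨i, rfl⟩)) hE₁ hlen

theorem hilbertSamuel_eq_of_sub_mem_of_infinite (h : ExtVanishing R (r + s) R)
    (hf : span (Set.range f) ≤ maximalIdeal R)
    (hE : HasMultiplicity (hilbertSamuel (span (Set.range f))) s E) {g : Fin r → R}
    (hfg : ∀ i, f i - g i ∈ maximalIdeal R ^ (s ! * E + 1)) :
    hilbertSamuel (span (Set.range f)) = hilbertSamuel (span (Set.range g)) := by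
  obtain ⟨q, hq, x, hx⟩ := exists_isReductionModulo_of_hasMultiplicity h hf hE
  rw [← hq] at hfg
  have hsup := span_range_sup_eq_of_sub_mem hfg
  have hx' := hx.of_le_sup_pow (le_sup_left.trans hsup.le)
  have hg : span (Set.range g) ≤ maximalIdeal R := (le_sup_left.trans hsup.ge).trans
    (sup_le hf (pow_le_self (Nat.succ_ne_zero _)))
  exact hilbertSamuel_eq_of_isReductionModulo (h.regularFamily_sumElim hf hx)
    (h.regularFamily_sumElim hg hx') hx hx'
    (sup_eq_sup_of_sup_eq_sup hsup (pow_le_pow_right (Nat.le_succ _)))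

end InfiniteResidueField

end Reduction

section LocalCohomologyVanishing

open CategoryTheory Limits Opposite Abelian

lemma exists_d_comp_eq_of_homologyι_comp_eq_zero {C ι : Type*} [Category* C] [Abelian C]
    {c : ComplexShape ι} (K : HomologicalComplex C c) {i j : ι} (hij : c.next i = j) {J : C}
    [Injective J] {k : K.opcycles i ⟶ J} (hk : K.homologyι i ≫ k = 0) :
    ∃ w : K.X j ⟶ J, K.d i j ≫ w = K.pOpcycles i ≫ k := by
  let S := ShortComplex.mk (K.homologyι i) (K.fromOpcycles i j) (K.homologyι_comp_fromOpcycles i j)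
  have hS : S.Exact := S.exact_of_f_is_kernel (K.homologyIsKernel i j hij)
  refine ⟨hS.descToInjective k hk, ?_⟩
  rw [← K.p_fromOpcycles, Category.assoc]
  exact congrArg _ (hS.comp_descToInjective k hk)

universe u

variable {R : Type u} [CommRing R]

/-- The functor `Hom(-, M)`, covariant with values in the opposite category of modules. Its left
derived functors are the functors `Ext^i(-, M)` from which `localCohomology` is built. -/
noncomputable abbrev homTo (M : ModuleCat.{u} R) : ModuleCat.{u} R ⥤ (ModuleCat.{u} R)ᵒᵖ :=
  ((linearYoneda R (ModuleCat.{u} R)).obj M).rightOp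

namespace homTo

variable {M X Y : ModuleCat.{u} R}

/-- A morphism `X ⟶ M`, seen as a linear map `R → Hom(X, M)` and hence as a morphism from
`Hom(X, M)` to `R` in the opposite category. -/
noncomputable def homEquiv : (X ⟶ M) ≃ ((homTo M).obj X ⟶ op (ModuleCat.of R R)) where
  toFun φ := Quiver.Hom.op (X := ModuleCat.of R R) (Y := ModuleCat.of R (X ⟶ M))
    (ModuleCat.ofHom (LinearMap.toSpanSingleton R (X ⟶ M) φ))
  invFun g := g.unop.hom (1 : R)
  left_inv φ := one_smul R φ
  right_inv g := Quiver.Hom.unop_inj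
    (ModuleCat.hom_ext (LinearMap.ext_ring (one_smul R (g.unop.hom (1 : R)))))

lemma map_comp_homEquiv (f : Y ⟶ X) (φ : X ⟶ M) :
    (homTo M).map f ≫ homEquiv φ = homEquiv (f ≫ φ) := by
  refine Quiver.Hom.unop_inj (ModuleCat.hom_ext (LinearMap.ext_ring ?_))
  change f ≫ ((1 : R) • φ) = (1 : R) • (f ≫ φ)
  rw [one_smul, one_smul]

lemma homEquiv_zero : homEquiv (0 : X ⟶ M) = 0 := by
  refine Quiver.Hom.unop_inj (ModuleCat.hom_ext (LinearMap.ext_ring ?_))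
  change (1 : R) • (0 : X ⟶ M) = 0
  rw [smul_zero]

lemma map_comp_homEquiv_eq_zero {f : Y ⟶ X} {φ : X ⟶ M} (h : f ≫ φ = 0) :
    (homTo M).map f ≫ homEquiv φ = 0 := by
  rw [map_comp_homEquiv, h, homEquiv_zero]

/-- The class in `Ext^i(X, M)` of a cocycle `φ` on a projective resolution of `X`, seen as a
morphism to `R` in the opposite category. -/
noncomputable def cocycleClass (P : ProjectiveResolution X) {i : ℕ} (φ : P.complex.X i ⟶ M)
    (h : P.complex.d (i + 1) i ≫ φ = 0) :
    ((homTo M).leftDerived i).obj X ⟶ op (ModuleCat.of R R) :=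
  (P.isoLeftDerivedObj (homTo M) i).hom ≫
    (((homTo M).mapHomologicalComplex _).obj P.complex).homologyι i ≫
      (((homTo M).mapHomologicalComplex _).obj P.complex).descOpcycles (homEquiv φ) (i + 1)
        (ChainComplex.prev _ _) (map_comp_homEquiv_eq_zero h)

lemma map_comp_cocycleClass {P : ProjectiveResolution X} {Q : ProjectiveResolution Y}
    {g : X ⟶ Y} (l : ProjectiveResolution.Hom P Q g) {i : ℕ} (φ : Q.complex.X i ⟶ M)
    (h : Q.complex.d (i + 1) i ≫ φ = 0) :
    ((homTo M).leftDerived i).map g ≫ cocycleClass Q φ h =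
      cocycleClass P (l.hom.f i ≫ φ) (by rw [← l.hom.comm_assoc, h, comp_zero]) := by
  unfold cocycleClass
  rw [ProjectiveResolution.isoLeftDerivedObj_hom_naturality_assoc g P Q l.hom
    l.hom_f_zero_comp_π_f_zero]
  congr 1
  refine (HomologicalComplex.homologyι_naturality_assoc _ _ _).trans (congrArg _ ?_)
  refine (HomologicalComplex.opcyclesMap_comp_descOpcycles _ _ _ _ _).trans ?_
  congr 1

lemma exists_map_d_comp_eq_of_cocycleClass_eq_zero {P : ProjectiveResolution X} {i j : ℕ}
    (hij : (ComplexShape.down ℕ).next i = j) {φ : P.complex.X i ⟶ M}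
    {h : P.complex.d (i + 1) i ≫ φ = 0} (hφ : cocycleClass P φ h = 0) :
    ∃ ψ : P.complex.X j ⟶ M, P.complex.d i j ≫ ψ = φ := by
  have : Projective (ModuleCat.of R R) := inferInstance
  obtain ⟨w, hw⟩ := exists_d_comp_eq_of_homologyι_comp_eq_zero
    (((homTo M).mapHomologicalComplex _).obj P.complex) hij
    ((cancel_epi (P.isoLeftDerivedObj (homTo M) i).hom).1 (hφ.trans comp_zero.symm))
  obtain ⟨ψ, rfl⟩ := homEquiv.surjective w
  exact ⟨ψ, homEquiv.injective ((map_comp_homEquiv _ _).symm.trans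
    (hw.trans (HomologicalComplex.p_descOpcycles _ _ _ _ _)))⟩

lemma extMk_eq_zero_of_cocycleClass_eq_zero {P : ProjectiveResolution X} {i : ℕ}
    {φ : P.complex.X i ⟶ M} {h : P.complex.d (i + 1) i ≫ φ = 0} (hφ : cocycleClass P φ h = 0) :
    P.extMk φ (i + 1) rfl h = 0 := by
  cases i with
  | zero =>
    obtain ⟨ψ, rfl⟩ := exists_map_d_comp_eq_of_cocycleClass_eq_zero ChainComplex.next_nat_zero hφ
    simp
  | succ p =>
    exact (P.extMk_eq_zero_iff φ _ rfl h p rfl).2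
      (exists_map_d_comp_eq_of_cocycleClass_eq_zero (ChainComplex.next_nat_succ p) hφ)

end homTo

/-- The inverse system of the modules `R ⧸ J ^ t`, indexed by `ℕᵒᵖ`. -/
noncomputable abbrev powerQuotients (J : Ideal R) : ℕᵒᵖ ⥤ ModuleCat.{u} R :=
  localCohomology.ringModIdeals (localCohomology.idealPowersDiagram J)

/-- Every element of every `Ext^i(R ⧸ J ^ t, M)` becomes zero in some `Ext^i(R ⧸ J ^ t', M)`: the
colimit `H^i_J(M)` vanishes. -/
def PowersExtVanishing (J : Ideal R) (i : ℕ) (M : ModuleCat.{u} R) : Prop :=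
  ∀ (t : ℕᵒᵖ) (α : Ext ((powerQuotients J).obj t) M i), ∃ (t' : ℕᵒᵖ) (w : t' ⟶ t),
    (Ext.mk₀ ((powerQuotients J).map w)).comp α (zero_add i) = 0

namespace PowersExtVanishing

variable {J : Ideal R} {i : ℕ}

theorem of_subsingleton_localCohomology {M : ModuleCat.{u} R}
    (h : Subsingleton ((localCohomology J i).obj M)) : PowersExtVanishing J i M := by
  intro t α
  let P t : ProjectiveResolution ((powerQuotients J).obj t) := projectiveResolution _
  obtain ⟨φ, hφ, rfl⟩ := (P t).extMk_surjective α (i + 1) rfl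
  let D := localCohomology.diagram (localCohomology.idealPowersDiagram J) i
  have hcolim : IsColimit (((evaluation _ _).obj M).mapCocone (colimit.cocone D)) :=
    isColimitOfPreserves _ (colimit.isColimit D)
  have hzero : Subsingleton (((evaluation _ _).obj M).mapCocone (colimit.cocone D)).pt := h
  let x : (D.obj (op t)).obj M := (homTo.cocycleClass (P t) φ hφ).unop.hom (1 : R)
  have := preservesFilteredColimitsOfSize_shrink.{0, u, 0, u} (forget (ModuleCat.{u} R))
  obtain ⟨k, w, w', hw⟩ := Concrete.isColimit_exists_of_rep_eq (D ⋙ (evaluation _ _).obj M) hcolim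
    (i := op t) (j := op t) x (0 : (D.obj (op t)).obj M) (hzero.elim _ _)
  refine ⟨k.unop, w.unop, ?_⟩
  let l : ProjectiveResolution.Hom (P k.unop) (P t) ((powerQuotients J).map w.unop) :=
    ⟨ProjectiveResolution.lift ((powerQuotients J).map w.unop) _ _, by
      rw [ProjectiveResolution.lift_commutes_zero, ChainComplex.single₀_map_f_zero]
      rfl⟩
  rw [ProjectiveResolution.mk₀_comp_extMk (φ := l)]
  refine homTo.extMk_eq_zero_of_cocycleClass_eq_zero ?_
  rw [← homTo.map_comp_cocycleClass l φ hφ]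
  exact Quiver.Hom.unop_inj (ModuleCat.hom_ext (LinearMap.ext_ring (hw.trans (map_zero _))))

lemma of_shortExact {S : ShortComplex (ModuleCat.{u} R)} (hS : S.ShortExact)
    (h₂ : PowersExtVanishing J i S.X₂) (h₁ : PowersExtVanishing J (i + 1) S.X₁) :
    PowersExtVanishing J i S.X₃ := by
  intro t α
  obtain ⟨t₁, w₁, hw₁⟩ := h₁ t (α.comp hS.extClass rfl)
  rw [← Ext.comp_assoc _ _ _ (zero_add i) rfl (by lia)] at hw₁
  obtain ⟨β, hβ⟩ := Ext.covariant_sequence_exact₃ _ hS _ rfl hw₁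
  obtain ⟨t₂, w₂, hw₂⟩ := h₂ t₁ β
  refine ⟨t₂, w₂ ≫ w₁, ?_⟩
  rw [Functor.map_comp, ← Ext.mk₀_comp_mk₀, Ext.comp_assoc_of_second_deg_zero, ← hβ,
    ← Ext.comp_assoc_of_third_deg_zero, hw₂, Ext.zero_comp]

variable {M : Type u} [AddCommGroup M] [Module R M]

lemma quotSMulTop (h : PowersExtVanishing J i (ModuleCat.of R M))
    (h' : PowersExtVanishing J (i + 1) (ModuleCat.of R M)) {z : R} (hz : IsSMulRegular M z) :
    PowersExtVanishing J i (ModuleCat.of R (QuotSMulTop z M)) :=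
  have hz' : IsSMulRegular (ModuleCat.of R M) z := hz
  of_shortExact hz'.smulShortComplex_shortExact h h'

lemma subsingleton_linearMap (h : PowersExtVanishing J 0 (ModuleCat.of R M)) :
    Subsingleton ((R ⧸ J) →ₗ[R] M) := by
  refine subsingleton_of_forall_eq 0 fun φ => ?_
  let p : (R ⧸ J ^ 1) →ₗ[R] (R ⧸ J) := Submodule.factor (pow_one J).le
  let ψ : (powerQuotients J).obj (op 1) ⟶ ModuleCat.of R M := ModuleCat.ofHom (φ ∘ₗ p)
  obtain ⟨t, w, hw⟩ := h (op 1) (Ext.mk₀ ψ)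
  rw [Ext.mk₀_comp_mk₀, Ext.mk₀_eq_zero_iff] at hw
  ext
  exact congrArg (fun g => g.hom (Ideal.Quotient.mk _ 1)) hw

open RingTheory.Sequence in
theorem exists_isWeaklyRegular [IsLocalRing R] [IsNoetherianRing R] [Module.Finite R M] {n : ℕ}
    (h : ∀ i < n, PowersExtVanishing (maximalIdeal R) i (ModuleCat.of R M)) :
    ∃ rs : List R, rs.length = n ∧ (∀ z ∈ rs, z ∈ maximalIdeal R) ∧ IsWeaklyRegular M rs := by
  induction n generalizing M with
  | zero => exact ⟨[], rfl, by simp, IsWeaklyRegular.nil R M⟩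
  | succ n ih =>
    obtain ⟨z, hz, hreg⟩ : ∃ z ∈ maximalIdeal R, IsSMulRegular M z := by
      simpa [Ideal.annihilator_quotient] using
        IsSMulRegular.subsingleton_linearMap_iff.1 (h 0 n.succ_pos).subsingleton_linearMap
    obtain ⟨rs, hlength, hmem, hrs⟩ := ih (M := QuotSMulTop z M) fun i hi =>
      (h i (by lia)).quotSMulTop (h (i + 1) (by lia)) hreg
    exact ⟨z :: rs, by simp [hlength], List.forall_mem_cons.2 ⟨hz, hmem⟩,
      (isWeaklyRegular_cons_iff M z rs).2 ⟨hreg, hrs⟩⟩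

end PowersExtVanishing

end LocalCohomologyVanishing

section BaseChange

open Polynomial TensorProduct

universe u

lemma colength_map_of_flat {A B : Type u} [CommRing A] [CommRing B] [IsLocalRing A]
    [IsLocalRing B] [Algebra A B] [IsLocalHom (algebraMap A B)] [Module.Flat A B]
    (h : (maximalIdeal A).map (algebraMap A B) = maximalIdeal B) (J : Ideal A) :
    colength (J.map (algebraMap A B)) = colength J := by
  have hlen := IsLocalRing.length_baseChange A B (A ⧸ J)
  rw [h, show Module.length B (B ⧸ maximalIdeal B) = 1 from colength_maximalIdeal,
    mul_one] at hlen
  exact (Algebra.TensorProduct.quotIdealMapEquivTensorQuot B J).toLinearEquiv.length_eq.trans hlen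

lemma map_span_range {ι A B : Type*} [CommSemiring A] [CommSemiring B] (φ : A →+* B) (f : ι → A) :
    (Ideal.span (Set.range f)).map φ = Ideal.span (Set.range (φ ∘ f)) := by
  rw [Ideal.map_span, ← Set.range_comp]

variable (R : Type u) [CommRing R] [IsLocalRing R]

instance isPrime_map_C_maximalIdeal : ((maximalIdeal R).map (C : R →+* R[X])).IsPrime :=
  Ideal.isPrime_map_C_of_isPrime

/-- The local ring `R(X)`, the localization of `R[X]` at the extension of the maximal ideal of `R`.
It is flat over `R` with the same lengths, and its residue field is infinite. -/
abbrev NagataRing : Type u := Localization.AtPrime ((maximalIdeal R).map (C : R →+* R[X]))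

namespace NagataRing

instance : Module.Flat R (NagataRing R) :=
  have : Module.Flat R[X] (NagataRing R) :=
    IsLocalization.flat _ ((maximalIdeal R).map (C : R →+* R[X])).primeCompl
  Module.Flat.trans R R[X] (NagataRing R)

lemma map_maximalIdeal :
    (maximalIdeal R).map (algebraMap R (NagataRing R)) = maximalIdeal (NagataRing R) := by
  rw [← Localization.AtPrime.map_eq_maximalIdeal, Ideal.map_map]
  rfl

instance : IsLocalHom (algebraMap R (NagataRing R)) :=
  ((local_hom_TFAE (algebraMap R (NagataRing R))).out 0 2).2 (map_maximalIdeal R).le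

instance [IsNoetherianRing R] : IsNoetherianRing (NagataRing R) :=
  IsLocalization.isNoetherianRing ((maximalIdeal R).map (C : R →+* R[X])).primeCompl _ inferInstance

-- The powers of `X` stay distinct modulo the maximal ideal.
instance : Infinite (ResidueField (NagataRing R)) := by
  refine Infinite.of_injective
    (fun n : ℕ => residue (NagataRing R) (algebraMap R[X] (NagataRing R) (X ^ n))) fun i j h => ?_
  by_contra hij
  have hmem : algebraMap R[X] (NagataRing R) (X ^ i - X ^ j) ∈ maximalIdeal (NagataRing R) := by
    rwa [← residue_eq_zero_iff, map_sub, map_sub, sub_eq_zero]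
  rw [IsLocalization.AtPrime.to_map_mem_maximal_iff (NagataRing R)
    ((maximalIdeal R).map (C : R →+* R[X])), Ideal.mem_map_C_iff] at hmem
  have hone := hmem i
  rw [coeff_sub, coeff_X_pow_self, coeff_X_pow, if_neg hij, sub_zero] at hone
  exact (Ideal.ne_top_iff_one _).1 (maximalIdeal.isMaximal R).ne_top hone

variable {R}

lemma hilbertSamuel_map (I : Ideal R) :
    hilbertSamuel (I.map (algebraMap R (NagataRing R))) = hilbertSamuel I := by
  ext n
  rw [hilbertSamuel, hilbertSamuel, ← map_maximalIdeal, ← Ideal.map_pow, ← Ideal.map_sup,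
    colength_map_of_flat (map_maximalIdeal R)]

lemma extVanishing [IsNoetherianRing R] {rs : List R} (hmem : ∀ z ∈ rs, z ∈ maximalIdeal R)
    (hreg : RingTheory.Sequence.IsWeaklyRegular R rs) :
    ExtVanishing (NagataRing R) rs.length (NagataRing R) := by
  rw [← List.length_map (algebraMap R (NagataRing R))]
  refine ExtVanishing.of_isWeaklyRegular _ (fun y hy => ?_) (hreg.of_flat (S := NagataRing R))
  obtain ⟨z, hz, rfl⟩ := List.mem_map.1 hy
  exact (map_maximalIdeal R).le (Ideal.mem_map_of_mem _ (hmem z hz))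

end NagataRing

open scoped Nat in
theorem hilbertSamuel_eq_of_sub_mem {R : Type u} [CommRing R] [IsLocalRing R] [IsNoetherianRing R]
    {r s E : ℕ} {rs : List R} (hlength : rs.length = r + s) (hmem : ∀ z ∈ rs, z ∈ maximalIdeal R)
    (hreg : RingTheory.Sequence.IsWeaklyRegular R rs) {f g : Fin r → R}
    (hf : Ideal.span (Set.range f) ≤ maximalIdeal R)
    (hE : HasMultiplicity (hilbertSamuel (Ideal.span (Set.range f))) s E)
    (hfg : ∀ i, f i - g i ∈ maximalIdeal R ^ (s ! * E + 1)) :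
    hilbertSamuel (Ideal.span (Set.range f)) = hilbertSamuel (Ideal.span (Set.range g)) := by
  have hext := NagataRing.extVanishing hmem hreg
  have hmap (g : Fin r → R) : hilbertSamuel (Ideal.span (Set.range g)) =
      hilbertSamuel (Ideal.span (Set.range (algebraMap R (NagataRing R) ∘ g))) := by
    rw [← NagataRing.hilbertSamuel_map, map_span_range]
  rw [hmap] at hE
  rw [hmap f, hmap g]
  refine hilbertSamuel_eq_of_sub_mem_of_infinite (hlength ▸ hext) ?_ hE fun i => ?_
  · rw [← map_span_range, ← NagataRing.map_maximalIdeal]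
    exact Ideal.map_mono hf
  · rw [← NagataRing.map_maximalIdeal, ← Ideal.map_pow, Function.comp_apply, Function.comp_apply,
      ← map_sub]
    exact Ideal.mem_map_of_mem _ (hfg i)

end BaseChange

theorem modLen_quotient_sup_pow (R : Type) [CommRing R] [IsLocalRing R] [IsNoetherianRing R]
    (I : Ideal R) (n : ℕ) :
    modLen R (R ⧸ (I ⊔ maximalIdeal R ^ n)) = (hilbertSamuel I n : ℕ∞) := by
  rw [natCast_hilbertSamuel, colength, Module.coe_length, modLen]

theorem statement12 (R : Type) [CommRing R] [IsNoetherianRing R] [IsLocalRing R]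
    (d r : ℕ) (hrd : r ≤ d) (hdim : ringKrullDim R = d)
    (hCM : ∀ i < d, Subsingleton ((localCohomology (maximalIdeal R) i).obj (ModuleCat.of R R)))
    (f : Fin r → R) (I : Ideal R) (hI : I = Ideal.span (Set.range f))
    (hsop : ringKrullDim (R ⧸ I) = ((d - r : ℕ) : WithBot ℕ∞))
    (Len : ℕ → ℕ) (hLen : ∀ n, modLen R (R ⧸ (I ⊔ maximalIdeal R ^ n)) = (Len n : ℕ∞))
    (E : ℕ)
    (hE : Tendsto (fun n : ℕ => (Len n : ℝ) * (Nat.factorial (d - r)) / (n : ℝ) ^ (d - r))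
      atTop (nhds (E : ℝ)))
    (N : ℕ) (hN : N = Nat.factorial (d - r) * E + 1)
    (ε : Fin r → R) (hε : ∀ i, ε i ∈ maximalIdeal R ^ N) :
    ∀ n : ℕ, 1 ≤ n →
      modLen R (R ⧸ (I ⊔ maximalIdeal R ^ n)) =
      modLen R (R ⧸ (Ideal.span (Set.range fun j => f j + ε j) ⊔ maximalIdeal R ^ n)) := by
  subst hI hN
  intro n _
  obtain rfl : Len = hilbertSamuel (Ideal.span (Set.range f)) := by
    ext k
    have h := hLen k
    rw [modLen_quotient_sup_pow] at h
    exact_mod_cast h.symm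
  have hf : Ideal.span (Set.range f) ≤ maximalIdeal R := by
    refine le_maximalIdeal fun htop => ?_
    have := Ideal.Quotient.subsingleton_iff.2 htop
    rw [ringKrullDim_eq_bot_of_subsingleton] at hsop
    exact WithBot.bot_ne_coe hsop
  obtain ⟨rs, hlength, hmem, hreg⟩ := PowersExtVanishing.exists_isWeaklyRegular (M := R)
    fun i hi => .of_subsingleton_localCohomology (hCM i hi)
  rw [modLen_quotient_sup_pow, modLen_quotient_sup_pow,
    hilbertSamuel_eq_of_sub_mem (hlength.trans (Nat.add_sub_cancel' hrd).symm) hmem hreg hf hE]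
  intro i
  rw [sub_add_cancel_left]
  exact neg_mem (hε i)
end
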